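/- arXiv:1812.08894 — 4 statements merged into one kernel-verified Lean document; each statement's English description precedes it below -/
import Mathlib

section
/- There exists a constant C > 0 depending only on n such that for every Radon measure μ on ℝⁿ with finite entropy λ(μ), one has C⁻¹ · sup_{x ∈ ℝⁿ, R > 0} μ(B_R(x))/R^{n−1} ≤ λ(μ) ≤ C · sup_{x ∈ ℝⁿ, R > 0} μ(B_R(x))/R^{n−1}, where B_R(x) is the Euclidean ball of radius R centered at x. -/
open MeasureTheory Metric Real ENNReal

/-- The (n-1)-dimensional Gaussian density `(4πs)^{-(n-1)/2} exp(-|x-y|²/(4s))` on `ℝⁿ`. -/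
noncomputable def gaussianDensity (n : ℕ) (y : EuclideanSpace ℝ (Fin n)) (s : ℝ)
    (x : EuclideanSpace ℝ (Fin n)) : ℝ :=
  (4 * Real.pi * s) ^ (-(((n : ℝ) - 1) / 2)) * Real.exp (-(dist x y) ^ 2 / (4 * s))

/-- The (mean curvature flow) entropy of a measure on `ℝⁿ`:
`λ(μ) = sup_{y ∈ ℝⁿ, s > 0} ∫ (4πs)^{-(n-1)/2} exp(-|x-y|²/(4s)) dμ(x)`. -/
noncomputable def entropy (n : ℕ) (μ : Measure (EuclideanSpace ℝ (Fin n))) : ℝ≥0∞ :=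
  ⨆ (y : EuclideanSpace ℝ (Fin n)) (s : ℝ) (_ : 0 < s),
    ∫⁻ x, ENNReal.ofReal (gaussianDensity n y s x) ∂μ

/-- `sup_{x ∈ ℝⁿ, R > 0} μ(B_R(x)) / R^{n-1}`, the optimal `(n-1)`-dimensional area growth
ratio of a measure on `ℝⁿ`. -/
noncomputable def areaRatio (n : ℕ) (μ : Measure (EuclideanSpace ℝ (Fin n))) : ℝ≥0∞ :=
  ⨆ (x : EuclideanSpace ℝ (Fin n)) (R : ℝ) (_ : 0 < R),
    μ (Metric.ball x R) / ENNReal.ofReal (R ^ ((n : ℝ) - 1))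

lemma areaRatio_le_mul_entropy (n : ℕ) (μ : Measure (EuclideanSpace ℝ (Fin n))) :
    areaRatio n μ ≤
      ENNReal.ofReal ((4 * Real.pi) ^ (((n : ℝ) - 1) / 2) * Real.exp (1 / 4)) * entropy n μ := by
  unfold areaRatio
  refine iSup_le fun x => iSup_le fun R => iSup_le fun hR => ?_
  have hpos : 0 < R ^ ((n : ℝ) - 1) := Real.rpow_pos_of_pos hR _
  have hpi : (0 : ℝ) < 4 * Real.pi := by positivity
  have hK : (0 : ℝ) < (4 * Real.pi) ^ (((n : ℝ) - 1) / 2) * Real.exp (1 / 4) := by positivity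
  set K := (4 * Real.pi) ^ (((n : ℝ) - 1) / 2) * Real.exp (1 / 4) with hKdef
  have hR2 : (R ^ 2) ^ (((n : ℝ) - 1) / 2) = R ^ ((n : ℝ) - 1) := by
    rw [← Real.rpow_natCast, ← Real.rpow_mul hR.le]
    congr 1
    push_cast
    ring
  have hent : ∫⁻ z, ENNReal.ofReal (gaussianDensity n x (R ^ 2) z) ∂μ ≤ entropy n μ := by
    unfold entropy
    exact le_iSup_of_le x (le_iSup_of_le (R ^ 2) (le_iSup_of_le (by positivity) le_rfl))
  have hlow : ENNReal.ofReal (K⁻¹ * (R ^ ((n : ℝ) - 1))⁻¹) * μ (ball x R) ≤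
      ∫⁻ z, ENNReal.ofReal (gaussianDensity n x (R ^ 2) z) ∂μ := by
    rw [← setLIntegral_const]
    refine le_trans (setLIntegral_mono' measurableSet_ball fun z hz => ?_)
      (setLIntegral_le_lintegral _ _)
    apply ENNReal.ofReal_le_ofReal
    unfold gaussianDensity
    rw [Real.rpow_neg (by positivity), Real.mul_rpow hpi.le (by positivity), hR2, hKdef,
      mul_inv, mul_inv, ← Real.exp_neg]
    have hz' : dist z x < R := hz
    have : Real.exp (-(1 / 4)) ≤ Real.exp (-(dist z x) ^ 2 / (4 * R ^ 2)) := by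
      apply Real.exp_le_exp.mpr
      rw [le_div_iff₀ (by positivity)]
      nlinarith [dist_nonneg (x := z) (y := x)]
    have h3 : 0 < ((4 * Real.pi) ^ (((n : ℝ) - 1) / 2))⁻¹ * (R ^ ((n : ℝ) - 1))⁻¹ := by
      positivity
    nlinarith
  have h := hlow.trans hent
  calc μ (ball x R) / ENNReal.ofReal (R ^ ((n : ℝ) - 1))
      = ENNReal.ofReal K * (ENNReal.ofReal (K⁻¹ * (R ^ ((n : ℝ) - 1))⁻¹) * μ (ball x R)) := by
        rw [← mul_assoc, ← ENNReal.ofReal_mul hK.le, mul_inv_cancel_left₀ hK.ne',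
          ENNReal.ofReal_inv_of_pos hpos, mul_comm, ENNReal.div_eq_inv_mul, mul_comm]
    _ ≤ _ := by gcongr

lemma summable_aux (n : ℕ) (hn : 1 ≤ n) :
    Summable fun k : ℕ => Real.exp (-(k : ℝ) ^ 2 / 4) * ((k : ℝ) + 1) ^ ((n : ℝ) - 1) := by
  have h0 := Real.summable_pow_mul_exp_neg_nat_mul (n - 1) (r := 1) one_pos
  have h1 := ((summable_nat_add_iff 1).mpr h0).mul_left (Real.exp 2)
  refine Summable.of_nonneg_of_le (fun k => by positivity) (fun k => ?_) h1
  have e : ((k : ℝ) + 1) ^ ((n : ℝ) - 1) = ((k : ℝ) + 1) ^ (n - 1) := by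
    rw [← Real.rpow_natCast, Nat.cast_sub hn, Nat.cast_one]
  rw [e]
  push_cast
  have h2 : Real.exp (-(k : ℝ) ^ 2 / 4) ≤ Real.exp 2 * Real.exp (-1 * ((k : ℝ) + 1)) := by
    rw [← Real.exp_add]
    apply Real.exp_le_exp.mpr
    nlinarith [sq_nonneg ((k : ℝ) - 2)]
  have h3 : 0 ≤ ((k : ℝ) + 1) ^ (n - 1) := by positivity
  nlinarith [mul_le_mul_of_nonneg_right h2 h3]

lemma entropy_le_mul_areaRatio (n : ℕ) (μ : Measure (EuclideanSpace ℝ (Fin n))) (hn : 1 ≤ n) :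
    entropy n μ ≤ (∑' k : ℕ, ENNReal.ofReal
      (Real.exp (-(k : ℝ) ^ 2 / 4) * ((k : ℝ) + 1) ^ ((n : ℝ) - 1))) * areaRatio n μ := by
  unfold entropy
  refine iSup_le fun y => iSup_le fun s => iSup_le fun hs => ?_
  obtain ⟨r, hr, rfl⟩ : ∃ r : ℝ, 0 < r ∧ r ^ 2 = s :=
    ⟨Real.sqrt s, Real.sqrt_pos.mpr hs, Real.sq_sqrt hs.le⟩
  have hp : (0 : ℝ) ≤ (n : ℝ) - 1 := by
    have : (1 : ℝ) ≤ n := by exact_mod_cast hn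
    linarith
  have hpos : 0 < r ^ ((n : ℝ) - 1) := Real.rpow_pos_of_pos hr _
  have hpi : (1 : ℝ) ≤ 4 * Real.pi := by nlinarith [Real.pi_gt_three]
  have hr2 : (r ^ 2) ^ (((n : ℝ) - 1) / 2) = r ^ ((n : ℝ) - 1) := by
    rw [← Real.rpow_natCast, ← Real.rpow_mul hr.le]
    congr 1
    push_cast
    ring
  have hpt : ∀ x, ENNReal.ofReal (gaussianDensity n y (r ^ 2) x) ≤
      ∑' k : ℕ, (ball y (((k : ℝ) + 1) * r)).indicator
        (fun _ => ENNReal.ofReal ((r ^ ((n : ℝ) - 1))⁻¹ * Real.exp (-(k : ℝ) ^ 2 / 4))) x := by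
    intro x
    refine le_trans ?_ (ENNReal.le_tsum ⌊dist x y / r⌋₊)
    have hlt : dist x y / r < (⌊dist x y / r⌋₊ : ℝ) + 1 := Nat.lt_floor_add_one _
    have hle : (⌊dist x y / r⌋₊ : ℝ) ≤ dist x y / r :=
      Nat.floor_le (div_nonneg dist_nonneg hr.le)
    rw [div_lt_iff₀ hr] at hlt
    rw [Set.indicator_of_mem (show x ∈ ball y _ from hlt)]
    apply ENNReal.ofReal_le_ofReal
    unfold gaussianDensity
    rw [Real.rpow_neg (by positivity), Real.mul_rpow (by positivity) (by positivity), hr2,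
      mul_inv]
    have h1 : ((4 * Real.pi) ^ (((n : ℝ) - 1) / 2))⁻¹ ≤ 1 :=
      inv_le_one_of_one_le₀ (Real.one_le_rpow hpi (by linarith))
    apply mul_le_mul
    · exact mul_le_of_le_one_left (by positivity) h1
    · apply Real.exp_le_exp.mpr
      have h2 : (⌊dist x y / r⌋₊ : ℝ) ^ 2 ≤ (dist x y / r) ^ 2 := by gcongr
      have h3 : -(dist x y) ^ 2 / (4 * r ^ 2) = -(dist x y / r) ^ 2 / 4 := by
        field_simp
      rw [h3]
      linarith
    · positivity
    · positivity
  refine (lintegral_mono hpt).trans ?_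
  rw [lintegral_tsum fun k => (measurable_const.indicator measurableSet_ball).aemeasurable,
    ← ENNReal.tsum_mul_right]
  refine ENNReal.tsum_le_tsum fun k => ?_
  rw [lintegral_indicator_const measurableSet_ball]
  have hkr : 0 < ((k : ℝ) + 1) * r := by positivity
  have hb : μ (ball y (((k : ℝ) + 1) * r)) ≤
      areaRatio n μ * ENNReal.ofReal ((((k : ℝ) + 1) * r) ^ ((n : ℝ) - 1)) := by
    rw [← ENNReal.div_le_iff (by simpa using Real.rpow_pos_of_pos hkr _) ENNReal.ofReal_ne_top]
    unfold areaRatio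
    exact le_iSup_of_le y (le_iSup_of_le _ (le_iSup_of_le hkr le_rfl))
  calc _ ≤ ENNReal.ofReal ((r ^ ((n : ℝ) - 1))⁻¹ * Real.exp (-(k : ℝ) ^ 2 / 4)) *
        (areaRatio n μ * ENNReal.ofReal ((((k : ℝ) + 1) * r) ^ ((n : ℝ) - 1))) := by gcongr
    _ = _ := by
      rw [mul_comm (areaRatio n μ), ← mul_assoc, ← ENNReal.ofReal_mul (by positivity),
        Real.mul_rpow (by positivity) hr.le]
      congr 2
      field_simp

/-- There is a constant `C > 0` depending only on `n` such that for every Radon measure `μ`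
on `ℝⁿ` with finite entropy,
`C⁻¹ sup_{x,R>0} μ(B_R(x))/R^{n-1} ≤ λ(μ) ≤ C sup_{x,R>0} μ(B_R(x))/R^{n-1}`. -/
theorem entropy_equiv_areaRatio (n : ℕ) (hn : 1 ≤ n) :
    ∃ C : ℝ≥0∞, 0 < C ∧ C ≠ ⊤ ∧
      ∀ μ : Measure (EuclideanSpace ℝ (Fin n)), IsLocallyFiniteMeasure μ →
        entropy n μ ≠ ⊤ →
          C⁻¹ * areaRatio n μ ≤ entropy n μ ∧ entropy n μ ≤ C * areaRatio n μ := by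
  set K := ENNReal.ofReal ((4 * Real.pi) ^ (((n : ℝ) - 1) / 2) * Real.exp (1 / 4)) with hK
  set S := ∑' k : ℕ, ENNReal.ofReal
      (Real.exp (-(k : ℝ) ^ 2 / 4) * ((k : ℝ) + 1) ^ ((n : ℝ) - 1)) with hS
  have hK0 : 0 < K := by
    rw [hK, ENNReal.ofReal_pos]
    positivity
  have hKS0 : 0 < K + S := hK0.trans_le le_self_add
  have hKS : K + S ≠ ⊤ :=
    ENNReal.add_ne_top.mpr ⟨ENNReal.ofReal_ne_top, (summable_aux n hn).tsum_ofReal_ne_top⟩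
  refine ⟨K + S, hKS0, hKS, fun μ _ _ => ⟨?_, ?_⟩⟩
  · rw [ENNReal.inv_mul_le_iff hKS0.ne' hKS]
    refine (areaRatio_le_mul_entropy n μ).trans ?_
    gcongr
    exact le_self_add
  · refine (entropy_le_mul_areaRatio n μ hn).trans ?_
    gcongr
    exact le_add_self
end

section
/- Fix n ≥ 1 and ε > 0, and let u : ℝⁿ × [0,∞) → ℝ be a smooth solution of ∂ₜu = Δu − (1/ε²) f(u) with f(u) = 2u(u²−1), |u| ≤ 1, such that for every T > 0 the function u and its spatial derivatives up to third order and its time derivative are uniformly bounded on ℝⁿ × [0,T]. Let μᵗ denote the measure on ℝⁿ with density x ↦ (ε/2)|∇u(x,t)|² + (1/ε)F(u(x,t)) with respect to Lebesgue measure, where F(u) = (1/2)(1−u²)². Let φ : ℝⁿ × [0,∞) → (0,∞) be smooth and suppose that for every T > 0 there exist C, a > 0 with φ + |∇φ| + |D²φ| + |∂ₜφ| + |∇φ|²/φ ≤ C exp(−a|x|²) on ℝⁿ × [0,T]. Then for every t > 0, d/dt ∫ φ(·,t) dμᵗ = −ε ∫ φ (Δu − ε^{−2} f(u) + ⟨∇u,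 ∇φ⟩/φ)² dx + ∫ (Δφ + ∂ₜφ) dμᵗ + ε ∫ (−⟨D²φ · ∇u, ∇u⟩ + ⟨∇u, ∇φ⟩²/φ) dx, where all spatial derivatives are evaluated at (x,t). -/
open Real MeasureTheory
open scoped RealInnerProductSpace

/-- The Laplacian of `f : ℝⁿ → ℝ` at `x`, as the sum of the second partial derivatives in
the coordinate directions. -/
noncomputable def spaceLaplacian (n : ℕ) (f : EuclideanSpace ℝ (Fin n) → ℝ)
    (x : EuclideanSpace ℝ (Fin n)) : ℝ :=
  ∑ i : Fin n,
    fderiv ℝ (fun y => fderiv ℝ f y (EuclideanSpace.single i (1 : ℝ))) x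
      (EuclideanSpace.single i (1 : ℝ))

namespace ACE

/-- Euclidean space. -/
abbrev EE (n : ℕ) := EuclideanSpace ℝ (Fin n)

/-- Coordinate vector. -/
noncomputable abbrev ee {n : ℕ} (i : Fin n) : EE n := EuclideanSpace.single i (1 : ℝ)

/-- Joint smoothness. -/
def Sm {n : ℕ} (f : EE n → ℝ → ℝ) : Prop :=
  ContDiff ℝ (⊤ : ℕ∞) (fun p : EE n × ℝ => f p.1 p.2)

/-- Spatial partial derivative. -/
noncomputable def dx {n : ℕ} (i : Fin n) (f : EE n → ℝ → ℝ) : EE n → ℝ → ℝ :=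
  fun x t => fderiv ℝ (fun y => f y t) x (ee i)

/-- Time derivative. -/
noncomputable def dt {n : ℕ} (f : EE n → ℝ → ℝ) : EE n → ℝ → ℝ :=
  fun x t => deriv (f x) t

variable {n : ℕ} {f g : EE n → ℝ → ℝ}

lemma Sm.slice (hf : Sm f) (t : ℝ) : ContDiff ℝ (⊤ : ℕ∞) (fun y => f y t) :=
  ContDiff.comp (g := fun p : EE n × ℝ => f p.1 p.2) (f := fun y : EE n => (y, t)) hf (by fun_prop)

lemma Sm.slice_t (hf : Sm f) (x : EE n) : ContDiff ℝ (⊤ : ℕ∞) (f x) :=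
  ContDiff.comp (g := fun p : EE n × ℝ => f p.1 p.2) (f := fun t : ℝ => (x, t)) hf (by fun_prop)

lemma Sm.diff (hf : Sm f) : Differentiable ℝ (fun p : EE n × ℝ => f p.1 p.2) :=
  ContDiff.differentiable hf (by simp)

lemma Sm.dx_eq (hf : Sm f) (i : Fin n) (x : EE n) (t : ℝ) :
    dx i f x t = fderiv ℝ (fun p : EE n × ℝ => f p.1 p.2) (x, t) (ee i, 0) := by
  have h1 : HasFDerivAt (fun y : EE n => (y, t))
    ((ContinuousLinearMap.id ℝ (EE n)).prod (0 : EE n →L[ℝ] ℝ)) x :=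
    (hasFDerivAt_id x).prodMk (hasFDerivAt_const t x)
  have h2 := HasFDerivAt.comp x ((hf.diff (x, t)).hasFDerivAt) h1
  have h3 : HasFDerivAt (fun y => f y t) _ x := h2
  simp [dx, h3.fderiv]

lemma Sm.dt_eq (hf : Sm f) (x : EE n) (t : ℝ) :
    dt f x t = fderiv ℝ (fun p : EE n × ℝ => f p.1 p.2) (x, t) (0, 1) := by
  have h1 : HasDerivAt (fun s : ℝ => (x, s)) ((0 : EE n), (1 : ℝ)) t :=
    (hasDerivAt_const t x).prodMk (hasDerivAt_id t)
  have h2 := HasFDerivAt.comp_hasDerivAt t ((hf.diff (x, t)).hasFDerivAt) h1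
  have h3 : HasDerivAt (f x) _ t := h2
  simp [dt, h3.deriv]

lemma Sm.fd (hf : Sm f) :
    ContDiff ℝ (⊤ : ℕ∞) (fderiv ℝ (fun p : EE n × ℝ => f p.1 p.2)) :=
  ContDiff.fderiv_right hf (by simp)

lemma Sm.dx (hf : Sm f) (i : Fin n) : Sm (dx i f) := by
  have : ContDiff ℝ (⊤ : ℕ∞) (fun p : EE n × ℝ =>
    fderiv ℝ (fun p : EE n × ℝ => f p.1 p.2) p (ee i, 0)) := hf.fd.clm_apply contDiff_const
  have e : (fun p : EE n × ℝ => ACE.dx i f p.1 p.2) = _ := funext fun p => hf.dx_eq i p.1 p.2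
  unfold Sm
  rw [e]
  exact this

lemma Sm.dt (hf : Sm f) : Sm (dt f) := by
  have : ContDiff ℝ (⊤ : ℕ∞) (fun p : EE n × ℝ =>
    fderiv ℝ (fun p : EE n × ℝ => f p.1 p.2) p (0, 1)) := hf.fd.clm_apply contDiff_const
  have e : (fun p : EE n × ℝ => ACE.dt f p.1 p.2) = _ := funext fun p => hf.dt_eq p.1 p.2
  unfold Sm
  rw [e]
  exact this

lemma Sm.snd (hf : Sm f) (v w : EE n × ℝ) (p : EE n × ℝ) :
    fderiv ℝ (fun q => fderiv ℝ (fun p : EE n × ℝ => f p.1 p.2) q v) p w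
      = fderiv ℝ (fderiv ℝ (fun p : EE n × ℝ => f p.1 p.2)) p w v := by
  have hd : DifferentiableAt ℝ (fderiv ℝ (fun p : EE n × ℝ => f p.1 p.2)) p :=
    (hf.fd.differentiable (by simp)) p
  rw [fderiv_clm_apply hd (differentiableAt_const v)]
  simp

lemma Sm.symm (hf : Sm f) (v w : EE n × ℝ) (p : EE n × ℝ) :
    fderiv ℝ (fun q => fderiv ℝ (fun p : EE n × ℝ => f p.1 p.2) q v) p w
      = fderiv ℝ (fun q => fderiv ℝ (fun p : EE n × ℝ => f p.1 p.2) q w) p v := by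
  rw [hf.snd, hf.snd]
  exact (ContDiff.contDiffAt hf).isSymmSndFDerivAt
    (by simp only [minSmoothness_of_isRCLikeNormedField]; exact WithTop.coe_le_coe.2 le_top) w v

lemma Sm.dx_dx (hf : Sm f) (i j : Fin n) (x : EE n) (t : ℝ) :
    ACE.dx i (ACE.dx j f) x t = ACE.dx j (ACE.dx i f) x t := by
  rw [(hf.dx j).dx_eq, (hf.dx i).dx_eq]
  simp only [hf.dx_eq]
  exact hf.symm _ _ _

lemma Sm.dt_dx (hf : Sm f) (i : Fin n) (x : EE n) (t : ℝ) :
    ACE.dt (ACE.dx i f) x t = ACE.dx i (ACE.dt f) x t := by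
  rw [(hf.dx i).dt_eq, hf.dt.dx_eq]
  simp only [hf.dx_eq, hf.dt_eq]
  exact hf.symm _ _ _

lemma Sm.hasDerivAt_t (hf : Sm f) (x : EE n) (t : ℝ) : HasDerivAt (f x) (ACE.dt f x t) t :=
  ((hf.slice_t x).differentiable (by simp) t).hasDerivAt

lemma Sm.hasDerivAt_x (hf : Sm f) (i : Fin n) (x : EE n) (t : ℝ) :
    HasDerivAt (fun s : ℝ => f (x + s • ee i) t) (ACE.dx i f x t) 0 :=
  ((hf.slice t).differentiable (by simp) x).hasFDerivAt.hasLineDerivAt (ee i)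

lemma Sm.dx_of (hf : Sm f) {i : Fin n} {x : EE n} {t d : ℝ}
    (h : HasDerivAt (fun s : ℝ => f (x + s • ee i) t) d 0) : ACE.dx i f x t = d :=
  (hf.hasDerivAt_x i x t).unique h

lemma Sm.cont (hf : Sm f) (t : ℝ) : Continuous (fun x => f x t) := (hf.slice t).continuous

lemma Sm.add (hf : Sm f) (hg : Sm g) : Sm (fun x t => f x t + g x t) := ContDiff.add hf hg
lemma Sm.sub (hf : Sm f) (hg : Sm g) : Sm (fun x t => f x t - g x t) := ContDiff.sub hf hg
lemma Sm.mul (hf : Sm f) (hg : Sm g) : Sm (fun x t => f x t * g x t) := ContDiff.mul hf hg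
lemma Sm.pow (hf : Sm f) (k : ℕ) : Sm (fun x t => f x t ^ k) := ContDiff.pow hf k
lemma Sm.const (c : ℝ) : Sm (fun (_ : EE n) _ => c) := contDiff_const
lemma Sm.sum {F : Fin n → EE n → ℝ → ℝ} (h : ∀ i, Sm (F i)) :
    Sm (fun x t => ∑ i, F i x t) := ContDiff.sum fun i _ => h i
lemma Sm.div (hf : Sm f) (hg : Sm g) (h0 : ∀ x t, g x t ≠ 0) : Sm (fun x t => f x t / g x t) :=
  ContDiff.div hf hg fun p => h0 p.1 p.2

/-- Dominated by a weight on a strip. -/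
def DS (T : ℝ) (G : EE n → ℝ) (f : EE n → ℝ → ℝ) : Prop :=
  ∃ C : ℝ, 0 ≤ C ∧ ∀ x, ∀ t ∈ Set.Icc (0 : ℝ) T, |f x t| ≤ C * G x

variable {T : ℝ} {G : EE n → ℝ}

lemma DS.add (hf : DS T G f) (hg : DS T G g) : DS T G (fun x t => f x t + g x t) := by
  obtain ⟨C, hC, h⟩ := hf
  obtain ⟨D, hD, k⟩ := hg
  refine ⟨C + D, by positivity, fun x t ht => (abs_add_le _ _).trans ?_⟩
  linarith [h x t ht, k x t ht]

lemma DS.neg (hf : DS T G f) : DS T G (fun x t => - f x t) := by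
  obtain ⟨C, hC, h⟩ := hf
  exact ⟨C, hC, fun x t ht => by simpa using h x t ht⟩

lemma DS.sub (hf : DS T G f) (hg : DS T G g) : DS T G (fun x t => f x t - g x t) := by
  simpa [sub_eq_add_neg] using hf.add hg.neg

lemma DS.zero : DS T G (fun _ _ => 0) := ⟨0, le_rfl, by simp⟩

lemma DS.sum {F : Fin n → EE n → ℝ → ℝ} (h : ∀ i, DS T G (F i)) :
    DS T G (fun x t => ∑ i, F i x t) := by
  choose C hC h using h
  refine ⟨∑ i, C i, Finset.sum_nonneg fun i _ => hC i, fun x t ht => ?_⟩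
  rw [Finset.sum_mul]
  exact (Finset.abs_sum_le_sum_abs _ _).trans (Finset.sum_le_sum fun i _ => h i x t ht)

/-- weight times bounded -/
lemma DS.mul (hf : DS T G f) (hg : DS T 1 g) : DS T G (fun x t => f x t * g x t) := by
  obtain ⟨C, hC, h⟩ := hf
  obtain ⟨D, hD, k⟩ := hg
  refine ⟨C * D, by positivity, fun x t ht => ?_⟩
  rw [abs_mul]
  have h1 := h x t ht
  have h2 := k x t ht
  simp only [Pi.one_apply, mul_one] at h2
  calc |f x t| * |g x t| ≤ (C * G x) * D :=
        mul_le_mul h1 h2 (abs_nonneg _) ((abs_nonneg _).trans h1)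
    _ = _ := by ring

lemma DS.mul' (hf : DS T 1 f) (hg : DS T G g) : DS T G (fun x t => f x t * g x t) := by
  simpa [mul_comm] using hg.mul hf

lemma DS.const (c : ℝ) : DS T (1 : EE n → ℝ) (fun _ _ => c) := ⟨|c|, abs_nonneg _, by simp⟩

lemma DS.cmul (c : ℝ) (hf : DS T G f) : DS T G (fun x t => c * f x t) := (DS.const c).mul' hf

lemma DS.pow (hf : DS T 1 f) (k : ℕ) : DS T 1 (fun x t => f x t ^ k) := by
  induction k with
  | zero => simpa using DS.const 1
  | succ k ih => simpa [pow_succ] using ih.mul hf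

lemma DS.integrable (hf : DS T G f) (hs : Sm f) (hG : Integrable G) {t : ℝ}
    (ht : t ∈ Set.Icc 0 T) : Integrable (fun x => f x t) := by
  obtain ⟨C, hC, h⟩ := hf
  exact (hG.const_mul C).mono' (hs.cont t).aestronglyMeasurable (ae_of_all _ fun x => h x t ht)

lemma integrable_gauss {a : ℝ} (ha : 0 < a) :
    Integrable (fun x : EE n => Real.exp (-a * ‖x‖ ^ 2)) := by
  have h := (GaussianFourier.integrable_cexp_neg_mul_sq_norm_add (V := EE n) (b := (a : ℂ))
    (by simpa using ha) 0 0).norm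
  refine h.congr (ae_of_all _ fun x => ?_)
  simp [Complex.norm_exp, ← Complex.ofReal_pow]

lemma norm_iter_dx (hf : Sm f) (i : Fin n) (k : ℕ) (x : EE n) (t : ℝ) :
    ‖iteratedFDeriv ℝ k (fun y => dx i f y t) x‖ ≤ ‖iteratedFDeriv ℝ (k + 1) (fun y => f y t) x‖ := by
  have h1 : ContDiff ℝ (⊤ : ℕ∞) (fderiv ℝ (fun y => f y t)) :=
    (hf.slice t).fderiv_right (by simp)
  have := norm_iteratedFDeriv_clm_apply_const (c := ee i) (n := k) h1.contDiffAt (x := x)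
    (by exact_mod_cast le_top)
  rw [norm_iteratedFDeriv_fderiv] at this
  simpa [dx] using this

lemma integral_dx (hf : Sm f) (i : Fin n) (t : ℝ) (h1 : Integrable (fun x => f x t))
    (h2 : Integrable (fun x => dx i f x t)) : ∫ x, dx i f x t = 0 := by
  have := integral_mul_fderiv_eq_neg_fderiv_mul_of_integrable (μ := (volume : Measure (EE n)))
    (f := fun _ => (1 : ℝ)) (g := fun x => f x t) (v := ee i) (by simp) (by simpa [dx] using h2)
    (by simpa using h1) (fun x _ => by fun_prop)
    (fun x _ => (hf.slice t).differentiable (by simp) x)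
  simpa [dx] using this

lemma grad_coord (v : EE n → ℝ) (x : EE n) (i : Fin n) :
    (gradient v x) i = fderiv ℝ v x (ee i) := by
  rw [← inner_gradient_left, EuclideanSpace.inner_single_right]
  simp

lemma inner_grad (f g : EE n → ℝ → ℝ) (x : EE n) (t : ℝ) :
    ⟪gradient (fun y => f y t) x, gradient (fun y => g y t) x⟫ = ∑ i, dx i f x t * dx i g x t := by
  simp only [PiLp.inner_apply, grad_coord]
  simp [dx, mul_comm]

lemma normsq_grad (f : EE n → ℝ → ℝ) (x : EE n) (t : ℝ) :
    ‖gradient (fun y => f y t) x‖ ^ 2 = ∑ i, dx i f x t ^ 2 := by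
  rw [← real_inner_self_eq_norm_sq, inner_grad]
  simp [sq]

lemma hess (hf : Sm f) (a : EE n) (x : EE n) (t : ℝ) :
    fderiv ℝ (fun z => fderiv ℝ (fun w => f w t) z) x a a
      = ∑ i, ∑ j, a i * a j * dx i (dx j f) x t := by
  have hd : DifferentiableAt ℝ (fun z => fderiv ℝ (fun w => f w t) z) x :=
    ((hf.slice t).fderiv_right (m := (⊤ : ℕ∞)) (by simp)).differentiable (by simp) x
  have ha : a = ∑ i, a i • ee i := by
    ext k; simp [Finset.sum_apply, Pi.single_apply]
  have h2 : ∀ i j, dx i (dx j f) x t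
      = fderiv ℝ (fun z => fderiv ℝ (fun w => f w t) z) x (ee i) (ee j) := by
    intro i j
    unfold dx
    rw [fderiv_clm_apply hd (differentiableAt_const _)]
    simp
  simp only [h2]
  conv_lhs => rw [ha]
  simp only [map_sum, map_smul, sum_apply, smul_apply,
    smul_eq_mul, Finset.mul_sum]
  rw [Finset.sum_comm]
  refine Finset.sum_congr rfl fun i _ => Finset.sum_congr rfl fun j _ => by ring

lemma lap_eq (f : EE n → ℝ → ℝ) (x : EE n) (t : ℝ) :
    spaceLaplacian n (fun y => f y t) x = ∑ i, dx i (dx i f) x t := rfl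

/-- `Δu - f(u)/ε²`. -/
noncomputable def WW (ε : ℝ) (u : EE n → ℝ → ℝ) : EE n → ℝ → ℝ :=
  fun x t => (∑ i, dx i (dx i u) x t) - (1 / ε ^ 2) * (2 * u x t * ((u x t) ^ 2 - 1))

/-- Energy density. -/
noncomputable def en (ε : ℝ) (u : EE n → ℝ → ℝ) : EE n → ℝ → ℝ :=
  fun x t => (ε / 2) * (∑ i, dx i u x t ^ 2) + (1 / ε) * ((1 / 2) * (1 - (u x t) ^ 2) ^ 2)

/-- `⟨∇u,∇φ⟩`. -/
noncomputable def gg (u φ : EE n → ℝ → ℝ) : EE n → ℝ → ℝ :=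
  fun x t => ∑ i, dx i u x t * dx i φ x t

/-- The vector field whose divergence is the error term. -/
noncomputable def XX (ε : ℝ) (u φ : EE n → ℝ → ℝ) (i : Fin n) : EE n → ℝ → ℝ :=
  fun x t => ε * (φ x t * (WW ε u x t * dx i u x t)) - en ε u x t * dx i φ x t
    + ε * (gg u φ x t * dx i u x t)

variable {ε : ℝ} {u φ : EE n → ℝ → ℝ}

lemma Sm.WW (hu : Sm u) : Sm (WW ε u) :=
  (Sm.sum fun i => (hu.dx i).dx i).sub
    ((Sm.const _).mul (((Sm.const 2).mul hu).mul ((hu.pow 2).sub (Sm.const 1))))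

lemma Sm.en (hu : Sm u) : Sm (en ε u) :=
  ((Sm.const _).mul (Sm.sum fun i => (hu.dx i).pow 2)).add
    ((Sm.const _).mul ((Sm.const _).mul (((Sm.const 1).sub (hu.pow 2)).pow 2)))

lemma Sm.gg (hu : Sm u) (hφ : Sm φ) : Sm (gg u φ) :=
  Sm.sum fun i => (hu.dx i).mul (hφ.dx i)

lemma Sm.XX (hu : Sm u) (hφ : Sm φ) (i : Fin n) : Sm (XX ε u φ i) :=
  (((Sm.const _).mul (hφ.mul (hu.WW.mul (hu.dx i)))).sub (hu.en.mul (hφ.dx i))).add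
    ((Sm.const _).mul ((hu.gg hφ).mul (hu.dx i)))

lemma dx_WW (hu : Sm u) (i : Fin n) (x : EE n) (t : ℝ) :
    dx i (WW ε u) x t = (∑ j, dx i (dx j (dx j u)) x t)
      - (1 / ε ^ 2) * ((6 * u x t ^ 2 - 2) * dx i u x t) := by
  apply hu.WW.dx_of
  have h1 := HasDerivAt.fun_sum (u := Finset.univ)
    fun j (_ : j ∈ Finset.univ) => ((hu.dx j).dx j).hasDerivAt_x i x t
  have h2 := hu.hasDerivAt_x i x t
  have h3 := h1.sub (((h2.const_mul 2).mul ((h2.pow 2).sub_const 1)).const_mul (1 / ε ^ 2))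
  refine h3.congr_deriv ?_
  simp
  left
  ring

lemma dx_en (hu : Sm u) (i : Fin n) (x : EE n) (t : ℝ) :
    dx i (en ε u) x t = ε * (∑ j, dx j u x t * dx i (dx j u) x t)
      + (1 / ε) * ((2 * u x t * (u x t ^ 2 - 1)) * dx i u x t) := by
  apply hu.en.dx_of
  have h1 := HasDerivAt.fun_sum (u := Finset.univ)
    fun j (_ : j ∈ Finset.univ) => ((hu.dx j).hasDerivAt_x i x t).pow 2
  have h2 := hu.hasDerivAt_x i x t
  have h3 := (h1.const_mul (ε / 2)).add
    (((((h2.pow 2).const_sub 1).pow 2).const_mul (1 / 2)).const_mul (1 / ε))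
  refine h3.congr_deriv ?_
  simp [Finset.mul_sum]
  congr 1
  · exact Finset.sum_congr rfl fun j _ => by ring
  · ring

lemma dt_en (hu : Sm u) (x : EE n) (t : ℝ) :
    HasDerivAt (en ε u x) (ε * (∑ j, dx j u x t * dx j (dt u) x t)
      + (1 / ε) * ((2 * u x t * (u x t ^ 2 - 1)) * dt u x t)) t := by
  have h1 := HasDerivAt.fun_sum (u := Finset.univ)
    fun j (_ : j ∈ Finset.univ) => ((hu.dx j).hasDerivAt_t x t).pow 2
  have h2 := hu.hasDerivAt_t x t
  have h3 := (h1.const_mul (ε / 2)).add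
    (((((h2.pow 2).const_sub 1).pow 2).const_mul (1 / 2)).const_mul (1 / ε))
  refine h3.congr_deriv ?_
  simp [Finset.mul_sum, hu.dt_dx]
  congr 1
  · exact Finset.sum_congr rfl fun j _ => by ring
  · ring

lemma dx_gg (hu : Sm u) (hφ : Sm φ) (i : Fin n) (x : EE n) (t : ℝ) :
    dx i (gg u φ) x t = ∑ j, (dx i (dx j u) x t * dx j φ x t + dx j u x t * dx i (dx j φ) x t) := by
  apply (hu.gg hφ).dx_of
  have h1 := HasDerivAt.fun_sum (u := Finset.univ)
    fun j (_ : j ∈ Finset.univ) =>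
      ((hu.dx j).hasDerivAt_x i x t).mul ((hφ.dx j).hasDerivAt_x i x t)
  refine h1.congr_deriv ?_
  simp

lemma dx_XX (hu : Sm u) (hφ : Sm φ) (i : Fin n) (x : EE n) (t : ℝ) :
    dx i (XX ε u φ i) x t =
      ε * (dx i φ x t * (WW ε u x t * dx i u x t)
        + φ x t * (dx i (WW ε u) x t * dx i u x t + WW ε u x t * dx i (dx i u) x t))
      - (dx i (en ε u) x t * dx i φ x t + en ε u x t * dx i (dx i φ) x t)
      + ε * (dx i (gg u φ) x t * dx i u x t + gg u φ x t * dx i (dx i u) x t) := by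
  apply (hu.XX hφ i).dx_of
  have h1 := (((hφ.hasDerivAt_x i x t).mul ((hu.WW (ε := ε).hasDerivAt_x i x t).mul
    ((hu.dx i).hasDerivAt_x i x t))).const_mul ε).sub
    ((hu.en (ε := ε).hasDerivAt_x i x t).mul ((hφ.dx i).hasDerivAt_x i x t))
  have h2 := h1.add ((((hu.gg hφ).hasDerivAt_x i x t).mul
    ((hu.dx i).hasDerivAt_x i x t)).const_mul ε)
  refine h2.congr_deriv ?_
  simp

/-- The pointwise identity. -/
lemma key (hε : ε ≠ 0) (hu : Sm u) (hφ : Sm φ) (x : EE n) (t : ℝ) :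
    ∑ i, dx i (XX ε u φ i) x t =
      2 * ε * (WW ε u x t * gg u φ x t)
      + ε * (φ x t * ∑ i, dx i u x t * dx i (WW ε u) x t)
      + ε * (φ x t * WW ε u x t ^ 2)
      + (1 / ε) * (φ x t * (WW ε u x t * (2 * u x t * (u x t ^ 2 - 1))))
      - en ε u x t * ∑ i, dx i (dx i φ) x t
      + ε * ∑ i, ∑ j, dx i u x t * dx j u x t * dx i (dx j φ) x t := by
  have hL : (∑ i, dx i (dx i u) x t)
      = WW ε u x t + (1 / ε ^ 2) * (2 * u x t * ((u x t) ^ 2 - 1)) := by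
    simp [WW]
  have hA : ∑ i, dx i (en ε u) x t * dx i φ x t
      = ε * (∑ i, ∑ j, dx j u x t * dx i (dx j u) x t * dx i φ x t)
        + (1 / ε) * ((2 * u x t * (u x t ^ 2 - 1)) * gg u φ x t) := by
    simp only [dx_en hu, gg, Finset.mul_sum, Finset.sum_mul, ← Finset.sum_add_distrib, add_mul]
    refine Finset.sum_congr rfl fun i _ => ?_
    congr 1
    · refine Finset.sum_congr rfl fun j _ => by ring
    · ring
  have hB : ∑ i, dx i (gg u φ) x t * dx i u x t
      = (∑ i, ∑ j, dx j u x t * dx i (dx j u) x t * dx i φ x t)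
        + ∑ i, ∑ j, dx i u x t * dx j u x t * dx i (dx j φ) x t := by
    simp only [dx_gg hu hφ, Finset.sum_mul, add_mul, Finset.sum_add_distrib]
    congr 1
    · rw [Finset.sum_comm]
      refine Finset.sum_congr rfl fun i _ => Finset.sum_congr rfl fun j _ => ?_
      rw [hu.dx_dx j i]
      ring
    · refine Finset.sum_congr rfl fun i _ => Finset.sum_congr rfl fun j _ => by ring
  have h0 : ∑ i, dx i (XX ε u φ i) x t =
      ε * (WW ε u x t * gg u φ x t + φ x t * ((∑ i, dx i u x t * dx i (WW ε u) x t)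
        + WW ε u x t * ∑ i, dx i (dx i u) x t))
      - ((∑ i, dx i (en ε u) x t * dx i φ x t) + en ε u x t * ∑ i, dx i (dx i φ) x t)
      + ε * ((∑ i, dx i (gg u φ) x t * dx i u x t) + gg u φ x t * ∑ i, dx i (dx i u) x t) := by
    have hg : WW ε u x t * gg u φ x t = ∑ i, dx i φ x t * (WW ε u x t * dx i u x t) := by
      rw [gg, Finset.mul_sum]
      exact Finset.sum_congr rfl fun i _ => by ring
    rw [hg]
    simp only [dx_XX hu hφ, Finset.mul_sum, ← Finset.sum_add_distrib, ← Finset.sum_sub_distrib]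
    exact Finset.sum_congr rfl fun i _ => by ring
  rw [h0, hA, hB, hL]
  field_simp
  ring

/-- All the bounds. -/
structure Bds (T : ℝ) (G : EE n → ℝ) (u φ : EE n → ℝ → ℝ) : Prop where
  u0 : DS T 1 u
  u1 : ∀ i, DS T 1 (dx i u)
  u2 : ∀ i j, DS T 1 (dx i (dx j u))
  u3 : ∀ i j k, DS T 1 (dx i (dx j (dx k u)))
  p0 : DS T G φ
  p1 : ∀ i, DS T G (dx i φ)
  p2 : ∀ i j, DS T G (dx i (dx j φ))
  pt : DS T G (dt φ)

lemma Bds.WW (b : Bds T G u φ) : DS T 1 (WW ε u) :=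
  (DS.sum fun i => b.u2 i i).sub (DS.cmul _ ((b.u0.cmul 2).mul ((b.u0.pow 2).sub (DS.const 1))))

lemma Bds.dW (b : Bds T G u φ) (hu : Sm u) (i : Fin n) : DS T 1 (dx i (ACE.WW ε u)) := by
  have : DS T (1 : EE n → ℝ) (fun x t => (∑ j, dx i (dx j (dx j u)) x t)
      - (1 / ε ^ 2) * ((6 * u x t ^ 2 - 2) * dx i u x t)) :=
    (DS.sum fun j => b.u3 i j j).sub
      (DS.cmul _ ((((b.u0.pow 2).cmul 6).sub (DS.const 2)).mul (b.u1 i)))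
  convert this using 3
  exact dx_WW hu _ _ _

lemma Bds.en (b : Bds T G u φ) : DS T 1 (en ε u) :=
  (DS.cmul _ (DS.sum fun i => (b.u1 i).pow 2)).add
    (DS.cmul _ (DS.cmul _ (((DS.const 1).sub (b.u0.pow 2)).pow 2)))

lemma Bds.de (b : Bds T G u φ) (hε : ε ≠ 0) (hu : Sm u) (i : Fin n) :
    DS T 1 (dx i (ACE.en ε u)) := by
  have : DS T (1 : EE n → ℝ) (fun x t => ε * (∑ j, dx j u x t * dx i (dx j u) x t)
      + (1 / ε) * ((2 * u x t * (u x t ^ 2 - 1)) * dx i u x t)) :=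
    (DS.cmul _ (DS.sum fun j => (b.u1 j).mul (b.u2 i j))).add
      (DS.cmul _ (((b.u0.cmul 2).mul ((b.u0.pow 2).sub (DS.const 1))).mul (b.u1 i)))
  convert this using 3
  exact dx_en hu _ _ _

lemma Bds.gg (b : Bds T G u φ) : DS T G (gg u φ) :=
  DS.sum fun i => (b.u1 i).mul' (b.p1 i)

lemma Bds.dg (b : Bds T G u φ) (hu : Sm u) (hφ : Sm φ) (i : Fin n) :
    DS T G (dx i (ACE.gg u φ)) := by
  have : DS T G (fun x t =>
      ∑ j, (dx i (dx j u) x t * dx j φ x t + dx j u x t * dx i (dx j φ) x t)) :=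
    DS.sum fun j => ((b.u2 i j).mul' (b.p1 j)).add ((b.u1 j).mul' (b.p2 i j))
  convert this using 3
  exact dx_gg hu hφ _ _ _

lemma Bds.XX (b : Bds T G u φ) (i : Fin n) : DS T G (XX ε u φ i) :=
  ((DS.cmul _ (b.p0.mul (b.WW.mul (b.u1 i)))).sub (b.en.mul' (b.p1 i))).add
    (DS.cmul _ (b.gg.mul (b.u1 i)))

lemma Bds.dX (b : Bds T G u φ) (hε : ε ≠ 0) (hu : Sm u) (hφ : Sm φ) (i : Fin n) :
    DS T G (dx i (ACE.XX ε u φ i)) := by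
  have : DS T G (fun x t => ε * (dx i φ x t * (ACE.WW ε u x t * dx i u x t)
        + φ x t * (dx i (ACE.WW ε u) x t * dx i u x t + ACE.WW ε u x t * dx i (dx i u) x t))
      - (dx i (ACE.en ε u) x t * dx i φ x t + ACE.en ε u x t * dx i (dx i φ) x t)
      + ε * (dx i (ACE.gg u φ) x t * dx i u x t + ACE.gg u φ x t * dx i (dx i u) x t)) :=
    ((DS.cmul _ (((b.p1 i).mul (b.WW.mul (b.u1 i))).add
      (b.p0.mul (((b.dW hu i).mul (b.u1 i)).add (b.WW.mul (b.u2 i i)))))).sub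
      (((b.de hε hu i).mul' (b.p1 i)).add (b.en.mul' (b.p2 i i)))).add
      (DS.cmul _ (((b.dg hu hφ i).mul (b.u1 i)).add (b.gg.mul (b.u2 i i))))
  convert this using 3
  exact dx_XX hu hφ _ _ _

lemma integral_div (b : Bds T G u φ) (hG : Integrable G) (hε : ε ≠ 0) (hu : Sm u) (hφ : Sm φ)
    {t : ℝ} (ht : t ∈ Set.Icc 0 T) : ∫ x, ∑ i, dx i (XX ε u φ i) x t = 0 := by
  have hi : ∀ i, Integrable (fun x => dx i (XX ε u φ i) x t) := fun i =>
    (b.dX hε hu hφ i).integrable ((hu.XX hφ i).dx i) hG ht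
  rw [integral_finsetSum _ fun i _ => hi i]
  exact Finset.sum_eq_zero fun i _ =>
    integral_dx (hu.XX hφ i) i t ((b.XX i).integrable (hu.XX hφ i) hG ht) (hi i)

lemma DS.mono (hf : DS T G f) (h : ∀ x t, |g x t| ≤ |f x t|) : DS T G g := by
  obtain ⟨C, hC, k⟩ := hf
  exact ⟨C, hC, fun x t ht => (h x t).trans (k x t ht)⟩

lemma abs_le_iter (hf : Sm f) (x : EE n) (t : ℝ) (i : Fin n) :
    |dx i f x t| ≤ ‖iteratedFDeriv ℝ 1 (fun y => f y t) x‖ := by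
  have := norm_iter_dx hf i 0 x t
  simpa using this

lemma abs_le_iter2 (hf : Sm f) (x : EE n) (t : ℝ) (i j : Fin n) :
    |dx i (dx j f) x t| ≤ ‖iteratedFDeriv ℝ 2 (fun y => f y t) x‖ :=
  (abs_le_iter (hf.dx j) x t i).trans (norm_iter_dx hf j 1 x t)

lemma abs_le_iter3 (hf : Sm f) (x : EE n) (t : ℝ) (i j k : Fin n) :
    |dx i (dx j (dx k f)) x t| ≤ ‖iteratedFDeriv ℝ 3 (fun y => f y t) x‖ :=
  (abs_le_iter2 (hf.dx k) x t i j).trans (norm_iter_dx hf k 2 x t)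

lemma abs_le_grad (f : EE n → ℝ → ℝ) (x : EE n) (t : ℝ) (i : Fin n) :
    |dx i f x t| ≤ ‖gradient (fun y => f y t) x‖ := by
  have := PiLp.norm_apply_le (gradient (fun y => f y t) x) i
  rw [grad_coord] at this
  exact this

lemma integral_mu {e : EE n → ℝ} (he : Continuous e) (h0 : ∀ x, 0 ≤ e x) (p : EE n → ℝ) :
    ∫ x, p x ∂((volume : Measure (EE n)).withDensity fun x => ENNReal.ofReal (e x))
      = ∫ x, e x * p x := by
  rw [integral_withDensity_eq_integral_toReal_smul (he.measurable.ennreal_ofReal)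
    (ae_of_all _ fun x => ENNReal.ofReal_lt_top)]
  simp [ENNReal.toReal_ofReal, h0]

lemma en_nonneg (hε : 0 < ε) (x : EE n) (t : ℝ) : 0 ≤ en ε u x t := by
  have : 0 ≤ ∑ i, dx i u x t ^ 2 := Finset.sum_nonneg fun i _ => sq_nonneg _
  unfold en
  positivity

/-- Time derivative of the integrand. -/
noncomputable def HH (ε : ℝ) (u φ : EE n → ℝ → ℝ) : EE n → ℝ → ℝ :=
  fun x t => en ε u x t * dt φ x t + φ x t * (ε * (∑ j, dx j u x t * dx j (WW ε u) x t)
      + (1 / ε) * ((2 * u x t * (u x t ^ 2 - 1)) * WW ε u x t))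

lemma Sm.HH (hu : Sm u) (hφ : Sm φ) : Sm (HH ε u φ) :=
  (hu.en.mul hφ.dt).add (hφ.mul (((Sm.const _).mul (Sm.sum fun j => (hu.dx j).mul (hu.WW.dx j))).add
    ((Sm.const _).mul ((((Sm.const 2).mul hu).mul ((hu.pow 2).sub (Sm.const 1))).mul hu.WW))))

lemma Bds.HH (b : Bds T G u φ) (hu : Sm u) : DS T G (HH ε u φ) :=
  (b.en.mul' b.pt).add (b.p0.mul ((DS.cmul _ (DS.sum fun j => (b.u1 j).mul (b.dW hu j))).add
    (DS.cmul _ (((b.u0.cmul 2).mul ((b.u0.pow 2).sub (DS.const 1))).mul b.WW))))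

lemma deriv_step (b : Bds T G u φ) (hG : Integrable G) (hu : Sm u) (hφ : Sm φ)
    (hpde : ∀ x t, 0 ≤ t → dt u x t = WW ε u x t) {t : ℝ} (ht : t ∈ Set.Ioo 0 T) :
    HasDerivAt (fun τ => ∫ x, en ε u x τ * φ x τ) (∫ x, HH ε u φ x t) t := by
  obtain ⟨C, hC, hb⟩ := b.HH (ε := ε) hu
  refine (hasDerivAt_integral_of_dominated_loc_of_deriv_le (μ := (volume : Measure (EE n)))
    (F := fun τ x => en ε u x τ * φ x τ) (F' := fun τ x => HH ε u φ x τ)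
    (bound := fun x => C * G x) (Ioo_mem_nhds ht.1 ht.2) ?_ ?_ ?_ ?_ (hG.const_mul C) ?_).2
  · exact Filter.Eventually.of_forall fun τ =>
      ((hu.en (ε := ε)).mul hφ).cont τ |>.aestronglyMeasurable
  · exact (b.en.mul' b.p0).integrable (hu.en.mul hφ) hG (Set.Ioo_subset_Icc_self ht)
  · exact ((hu.HH hφ).cont t).aestronglyMeasurable
  · exact ae_of_all _ fun x s hs => hb x s (Set.Ioo_subset_Icc_self hs)
  · refine ae_of_all _ fun x s hs => ?_
    refine ((dt_en (ε := ε) hu x s).mul (hφ.hasDerivAt_t x s)).congr_deriv ?_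
    have h1 : ∀ j, dx j (dt u) x s = dx j (WW ε u) x s := by
      intro j
      have : (fun y => dt u y s) = (fun y => WW ε u y s) := funext fun y => hpde y s hs.1.le
      unfold dx
      rw [this]
    simp only [h1, hpde x s hs.1.le, HH]
    ring

lemma comb (ε : ℝ) {A B C D : EE n → ℝ} (hA : Integrable A) (hB : Integrable B)
    (hC : Integrable C) (hD : Integrable D) (h0 : ∫ x, D x = 0) :
    ∫ x, (-ε * A x + B x + ε * C x + D x)
      = -ε * (∫ x, A x) + (∫ x, B x) + ε * (∫ x, C x) := by
  have h1 : Integrable (fun x => -ε * A x) := hA.const_mul _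
  have h2 : Integrable (fun x => ε * C x) := hC.const_mul _
  have h3 : Integrable (fun x => -ε * A x + B x) := h1.add hB
  have h4 : Integrable (fun x => -ε * A x + B x + ε * C x) := h3.add h2
  rw [integral_add h4 hD, integral_add h3 h2, integral_add h1 hB, integral_const_mul,
    integral_const_mul, h0, add_zero]

lemma final (b : Bds T G u φ) (hG : Integrable G) (hε : 0 < ε) (hu : Sm u) (hφ : Sm φ)
    (hpos : ∀ x t, 0 < φ x t) (hq : DS T G (fun x t => gg u φ x t ^ 2 / φ x t))
    {t : ℝ} (ht : t ∈ Set.Icc 0 T) :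
    ∫ x, HH ε u φ x t =
      -ε * (∫ x, φ x t * (WW ε u x t + gg u φ x t / φ x t) ^ 2)
        + (∫ x, en ε u x t * ((∑ i, dx i (dx i φ) x t) + dt φ x t))
        + ε * (∫ x, (-(∑ i, ∑ j, dx i u x t * dx j u x t * dx i (dx j φ) x t)
              + gg u φ x t ^ 2 / φ x t)) := by
  have hne : ∀ x t, φ x t ≠ 0 := fun x t => (hpos x t).ne'
  have hg := hu.gg hφ
  have s1 : Sm (fun x t => φ x t * (WW ε u x t + gg u φ x t / φ x t) ^ 2) :=
    hφ.mul ((hu.WW.add (hg.div hφ hne)).pow 2)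
  have b1 : DS T G (fun x t => φ x t * (WW ε u x t + gg u φ x t / φ x t) ^ 2) := by
    have : DS T G (fun x t => φ x t * WW ε u x t ^ 2 + 2 * (gg u φ x t * WW ε u x t)
      + gg u φ x t ^ 2 / φ x t) :=
      ((b.p0.mul (b.WW.pow 2)).add (DS.cmul 2 (b.gg.mul b.WW))).add hq
    convert this using 3 with x t
    have := hne x t
    field_simp
    ring
  have s2 : Sm (fun x t => en ε u x t * ((∑ i, dx i (dx i φ) x t) + dt φ x t)) :=
    hu.en.mul ((Sm.sum fun i => (hφ.dx i).dx i).add hφ.dt)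
  have b2 : DS T G (fun x t => en ε u x t * ((∑ i, dx i (dx i φ) x t) + dt φ x t)) :=
    b.en.mul' ((DS.sum fun i => b.p2 i i).add b.pt)
  have s3 : Sm (fun x t => ∑ i, ∑ j, dx i u x t * dx j u x t * dx i (dx j φ) x t) :=
    Sm.sum fun i => Sm.sum fun j => ((hu.dx i).mul (hu.dx j)).mul ((hφ.dx j).dx i)
  have b3 : DS T G (fun x t => ∑ i, ∑ j, dx i u x t * dx j u x t * dx i (dx j φ) x t) :=
    DS.sum fun i => DS.sum fun j => ((b.u1 i).mul (b.u1 j)).mul' (b.p2 i j)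
  have sq : Sm (fun x t => gg u φ x t ^ 2 / φ x t) := (hg.pow 2).div hφ hne
  have i1 := b1.integrable s1 hG ht
  have i2 := b2.integrable s2 hG ht
  have i3 : Integrable (fun x => -(∑ i, ∑ j, dx i u x t * dx j u x t * dx i (dx j φ) x t)
              + gg u φ x t ^ 2 / φ x t) :=
    (b3.integrable s3 hG ht).neg.add (hq.integrable sq hG ht)
  have i4 : Integrable (fun x => ∑ i, dx i (XX ε u φ i) x t) :=
    (DS.sum fun i => b.dX hε.ne' hu hφ i).integrable (Sm.sum fun i => (hu.XX hφ i).dx i) hG ht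
  have e4 := integral_div b hG hε.ne' hu hφ ht
  rw [← comb ε i1 i2 i3 i4 e4]
  congr 1
  funext x
  rw [key hε.ne' hu hφ, HH]
  have := hne x t
  field_simp
  ring

end ACE

/-- Ilmanen's differentiation formula: if `u` solves the parabolic Allen–Cahn equation
`∂ₜu = Δu - (1/ε²)f(u)` with the standard double well, with derivative bounds on time
strips, `μᵗ` is the associated energy measure with density
`(ε/2)|∇u|² + (1/ε)F(u)` w.r.t. Lebesgue measure, and `φ > 0` is a smooth test function
with Gaussian decay on time strips, then for all `t > 0`,
`d/dt ∫ φ dμᵗ = -ε∫φ(Δu - ε⁻²f(u) + ⟨∇u,∇φ⟩/φ)² dx + ∫(Δφ + ∂ₜφ) dμᵗ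
  + ε∫(-⟨D²φ·∇u,∇u⟩ + ⟨∇u,∇φ⟩²/φ) dx`. -/
theorem allen_cahn_energy_derivative (n : ℕ) (hn : 1 ≤ n) (ε : ℝ) (hε : 0 < ε)
    (u : EuclideanSpace ℝ (Fin n) → ℝ → ℝ)
    (hsmooth : ContDiff ℝ (⊤ : ℕ∞) (fun p : EuclideanSpace ℝ (Fin n) × ℝ => u p.1 p.2))
    (hu1 : ∀ x t, |u x t| ≤ 1)
    (hpde : ∀ x, ∀ t, 0 ≤ t →
      deriv (u x) t = spaceLaplacian n (fun y => u y t) x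
        - (1 / ε ^ 2) * (2 * u x t * ((u x t) ^ 2 - 1)))
    (hbnd : ∀ T > (0 : ℝ), ∃ C : ℝ, ∀ x, ∀ t ∈ Set.Icc (0 : ℝ) T,
      (∀ i ≤ 3, ‖iteratedFDeriv ℝ i (fun y => u y t) x‖ ≤ C) ∧ |deriv (u x) t| ≤ C)
    (φ : EuclideanSpace ℝ (Fin n) → ℝ → ℝ)
    (hφsmooth : ContDiff ℝ (⊤ : ℕ∞) (fun p : EuclideanSpace ℝ (Fin n) × ℝ => φ p.1 p.2))
    (hφpos : ∀ x t, 0 < φ x t)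
    (hφdecay : ∀ T > (0 : ℝ), ∃ C > (0 : ℝ), ∃ a > (0 : ℝ), ∀ x, ∀ t ∈ Set.Icc (0 : ℝ) T,
      φ x t + ‖gradient (fun y => φ y t) x‖ + ‖iteratedFDeriv ℝ 2 (fun y => φ y t) x‖
          + |deriv (φ x) t| + ‖gradient (fun y => φ y t) x‖ ^ 2 / φ x t
        ≤ C * Real.exp (-a * ‖x‖ ^ 2))
    (μ : ℝ → Measure (EuclideanSpace ℝ (Fin n)))
    (hμ : ∀ t, μ t = volume.withDensity (fun x =>
      ENNReal.ofReal ((ε / 2) * ‖gradient (fun y => u y t) x‖ ^ 2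
        + (1 / ε) * ((1 / 2) * (1 - (u x t) ^ 2) ^ 2)))) :
    ∀ t > (0 : ℝ), HasDerivAt (fun τ => ∫ x, φ x τ ∂(μ τ))
      (-ε * (∫ x, φ x t *
          (spaceLaplacian n (fun y => u y t) x
            - (1 / ε ^ 2) * (2 * u x t * ((u x t) ^ 2 - 1))
            + ⟪gradient (fun y => u y t) x, gradient (fun y => φ y t) x⟫ / φ x t) ^ 2)
        + (∫ x, (spaceLaplacian n (fun y => φ y t) x + deriv (φ x) t) ∂(μ t))
        + ε * (∫ x,
            (-(fderiv ℝ (fun z => fderiv ℝ (fun w => φ w t) z) x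
                (gradient (fun y => u y t) x) (gradient (fun y => u y t) x))
              + ⟪gradient (fun y => u y t) x, gradient (fun y => φ y t) x⟫ ^ 2
                / φ x t))) t := by
  
  intro t ht
  have hu : ACE.Sm u := hsmooth
  have hφ : ACE.Sm φ := hφsmooth
  have hT : (0 : ℝ) < t + 1 := by linarith
  obtain ⟨C, hC⟩ := hbnd (t + 1) hT
  obtain ⟨D, hD, a, ha, hdec⟩ := hφdecay (t + 1) hT
  set G : ACE.EE n → ℝ := fun x => Real.exp (-a * ‖x‖ ^ 2) with hGdef
  have hG : Integrable G := ACE.integrable_gauss ha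
  have hdec' : ∀ x, ∀ s ∈ Set.Icc (0 : ℝ) (t + 1),
      φ x s ≤ D * G x ∧ ‖gradient (fun y => φ y s) x‖ ≤ D * G x ∧
      ‖iteratedFDeriv ℝ 2 (fun y => φ y s) x‖ ≤ D * G x ∧ |deriv (φ x) s| ≤ D * G x ∧
      ‖gradient (fun y => φ y s) x‖ ^ 2 / φ x s ≤ D * G x := by
    intro x s hs
    have h := hdec x s hs
    have h1 := hφpos x s
    have h2 := norm_nonneg (gradient (fun y => φ y s) x)
    have h3 := norm_nonneg (iteratedFDeriv ℝ 2 (fun y => φ y s) x)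
    have h4 := abs_nonneg (deriv (φ x) s)
    have h5 : 0 ≤ ‖gradient (fun y => φ y s) x‖ ^ 2 / φ x s := by positivity
    simp only [hGdef]
    refine ⟨?_, ?_, ?_, ?_, ?_⟩ <;> linarith
  have b : ACE.Bds (t + 1) G u φ :=
    { u0 := ⟨1, zero_le_one, fun x s _ => by simpa using hu1 x s⟩
      u1 := fun i => ⟨|C|, abs_nonneg _, fun x s hs => by
        simpa using (ACE.abs_le_iter hu x s i).trans
          (((hC x s hs).1 1 (by norm_num)).trans (le_abs_self C))⟩
      u2 := fun i j => ⟨|C|, abs_nonneg _, fun x s hs => by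
        simpa using (ACE.abs_le_iter2 hu x s i j).trans
          (((hC x s hs).1 2 (by norm_num)).trans (le_abs_self C))⟩
      u3 := fun i j k => ⟨|C|, abs_nonneg _, fun x s hs => by
        simpa using (ACE.abs_le_iter3 hu x s i j k).trans
          (((hC x s hs).1 3 (by norm_num)).trans (le_abs_self C))⟩
      p0 := ⟨D, hD.le, fun x s hs => by
        rw [abs_of_pos (hφpos x s)]
        exact (hdec' x s hs).1⟩
      p1 := fun i => ⟨D, hD.le, fun x s hs =>
        (ACE.abs_le_grad φ x s i).trans (hdec' x s hs).2.1⟩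
      p2 := fun i j => ⟨D, hD.le, fun x s hs =>
        (ACE.abs_le_iter2 hφ x s i j).trans (hdec' x s hs).2.2.1⟩
      pt := ⟨D, hD.le, fun x s hs => (hdec' x s hs).2.2.2.1⟩ }
  have hq : ACE.DS (t + 1) G (fun x s => ACE.gg u φ x s ^ 2 / φ x s) := by
    have h1 : ACE.DS (t + 1) G (fun x s => ‖gradient (fun y => φ y s) x‖ ^ 2 / φ x s) :=
      ⟨D, hD.le, fun x s hs => by
        have h1 := hφpos x s
        rw [abs_of_nonneg (by positivity)]
        exact (hdec' x s hs).2.2.2.2⟩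
    have h2 : ACE.DS (t + 1) 1 (fun x s => ∑ i, ACE.dx i u x s ^ 2) :=
      ACE.DS.sum fun i => (b.u1 i).pow 2
    refine (h2.mul' h1).mono fun x s => ?_
    have hp := hφpos x s
    rw [← ACE.normsq_grad, ACE.gg, ← ACE.inner_grad, abs_of_nonneg (by positivity),
      abs_of_nonneg (by positivity), ← mul_div_assoc, ← mul_pow]
    have := abs_real_inner_le_norm (gradient (fun y => u y s) x) (gradient (fun y => φ y s) x)
    rw [← sq_abs]
    gcongr
  have hpde' : ∀ x s, 0 ≤ s → ACE.dt u x s = ACE.WW ε u x s := fun x s hs => hpde x s hs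
  have hmu : ∀ s (p : ACE.EE n → ℝ), ∫ x, p x ∂(μ s) = ∫ x, ACE.en ε u x s * p x := by
    intro s p
    rw [hμ s, ← ACE.integral_mu (hu.en.cont s) (fun x => ACE.en_nonneg hε x s)]
    simp only [ACE.normsq_grad, ACE.en]
  have h1 := ACE.deriv_step (ε := ε) b hG hu hφ hpde' (t := t) ⟨ht, by linarith⟩
  rw [ACE.final b hG hε hu hφ hφpos hq ⟨ht.le, by linarith⟩] at h1
  simp only [hmu]
  convert h1 using 1
  congr 2
  · congr 2
    funext x
    rw [ACE.inner_grad]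
    rfl
  · congr 1
    funext x
    rw [ACE.inner_grad, ACE.hess hφ]
    simp only [ACE.grad_coord]
    rfl
end

section
/- Fix n ≥ 1 and ε > 0, and let u : ℝⁿ × [0,∞) → ℝ be a smooth solution of ∂ₜu = Δu − (1/ε²) f(u) with f(u) = 2u(u²−1), |u| ≤ 1, such that for every T > 0 the function u and its spatial derivatives up to third order and its time derivative are uniformly bounded on ℝⁿ × [0,T]. Let μᵗ denote the measure with density (ε/2)|∇u(x,t)|² + (1/ε)F(u(x,t)) with respect to Lebesgue measure, F(u) = (1/2)(1−u²)². Assume the discrepancy is nonpositive at every time, i.e. (ε/2)|∇u(x,t)|² ≤ (1/ε)F(u(x,t)) for all x ∈ ℝⁿ and t ≥ 0. Then for every y ∈ ℝⁿ and all 0 ≤ t₁ ≤ t₂ < s, ∫ ρ_{y,s}(x,t₂) dμ^{t₂}(x) ≤ ∫ ρ_{y,s}(x,t₁) dμ^{t₁}(x), where ρ_{y,s}(x,t) = (4π(s−t))^{−(n−1)/2} exp(−|x−y|²/(4(s−t))). -/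
open Real MeasureTheory

namespace ACM

abbrev EE (n : ℕ) := EuclideanSpace ℝ (Fin n)

noncomputable def dv {W : Type*} [NormedAddCommGroup W] [NormedSpace ℝ W] (v : W) (F : W → ℝ)
    (p : W) : ℝ := fderiv ℝ F p v

noncomputable def eS {n : ℕ} (i : Fin n) : EE n × ℝ := (EuclideanSpace.single i (1 : ℝ), 0)
noncomputable def eT {n : ℕ} : EE n × ℝ := (0, 1)

section
variable {W : Type*} [NormedAddCommGroup W] [NormedSpace ℝ W]

lemma dv_smooth (v : W) {F : W → ℝ} (hF : ContDiff ℝ (⊤ : ℕ∞) F) :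
    ContDiff ℝ (⊤ : ℕ∞) (dv v F) := by
  unfold dv
  exact (hF.fderiv_right (m := (⊤ : ℕ∞)) (by norm_cast)).clm_apply contDiff_const

lemma dv_dv (v w : W) {F : W → ℝ} (hF : ContDiff ℝ (⊤ : ℕ∞) F) (p : W) :
    dv v (dv w F) p = fderiv ℝ (fderiv ℝ F) p v w := by
  unfold dv
  have h : DifferentiableAt ℝ (fderiv ℝ F) p :=
    ((hF.fderiv_right (m := (⊤ : ℕ∞)) (by norm_cast)).differentiable (by simp)) p
  rw [fderiv_clm_apply h (differentiableAt_const _)]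
  simp

lemma dv_comm (v w : W) {F : W → ℝ} (hF : ContDiff ℝ (⊤ : ℕ∞) F) (p : W) :
    dv v (dv w F) p = dv w (dv v F) p := by
  rw [dv_dv v w hF, dv_dv w v hF]
  exact (hF.contDiffAt (x := p)).isSymmSndFDerivAt (by simp only [minSmoothness_of_isRCLikeNormedField]; exact (ENat.LEInfty.out)) v w

lemma norm_dv (v : W) {F : W → ℝ} (hF : ContDiff ℝ (⊤ : ℕ∞) F) (k : ℕ) (p : W) :
    ‖iteratedFDeriv ℝ k (dv v F) p‖ ≤ ‖v‖ * ‖iteratedFDeriv ℝ (k+1) F p‖ := by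
  unfold dv
  have h := (hF.fderiv_right (m := (⊤ : ℕ∞)) (by norm_cast)).contDiffAt (x := p)
  refine (norm_iteratedFDeriv_clm_apply_const (n := k) h (by exact_mod_cast le_top)).trans ?_
  rw [norm_iteratedFDeriv_fderiv]

end

section
variable {n : ℕ}

lemma slice_fderiv {F : EE n × ℝ → ℝ} (hF : ContDiff ℝ (⊤ : ℕ∞) F) (t : ℝ) (v x : EE n) :
    dv v (fun y => F (y, t)) x = dv (v, (0:ℝ)) F (x, t) := by
  unfold dv
  have h1 : HasFDerivAt F (fderiv ℝ F (x,t)) (x,t) :=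
    (hF.differentiable (by simp) _).hasFDerivAt
  have h2 : HasFDerivAt (fun y : EE n => (y, t)) (ContinuousLinearMap.inl ℝ (EE n) ℝ) x := 
    hasFDerivAt_prodMk_left x t
  have := (h1.comp x h2).fderiv
  simp only [Function.comp_def] at this
  rw [this]; simp

lemma slice_smooth {F : EE n × ℝ → ℝ} (hF : ContDiff ℝ (⊤ : ℕ∞) F) (t : ℝ) :
    ContDiff ℝ (⊤ : ℕ∞) (fun y => F (y, t)) := by
  exact hF.comp (by fun_prop)

lemma hasDeriv_S {F : EE n × ℝ → ℝ} (hF : ContDiff ℝ (⊤ : ℕ∞) F) (i : Fin n) (x : EE n) (t : ℝ) :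
    HasDerivAt (fun σ : ℝ => F (x + σ • EuclideanSpace.single i (1:ℝ), t)) (dv (eS i) F (x,t)) 0 := by
  have h1 : HasFDerivAt F (fderiv ℝ F (x,t)) (x + (0:ℝ) • EuclideanSpace.single i (1:ℝ),t) := by
    simpa using (hF.differentiable (by simp) _).hasFDerivAt
  have h2 : HasDerivAt (fun σ : ℝ => ((x + σ • EuclideanSpace.single i (1:ℝ), t) : EE n × ℝ)) (eS i) 0 := by
    unfold eS
    refine HasDerivAt.prodMk ?_ (hasDerivAt_const _ _)
    simpa using ((hasDerivAt_id (0:ℝ)).smul_const (EuclideanSpace.single i (1:ℝ))).const_add x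
  exact h1.comp_hasDerivAt 0 h2

lemma hasDeriv_T {F : EE n × ℝ → ℝ} (hF : ContDiff ℝ (⊤ : ℕ∞) F) (x : EE n) (t : ℝ) :
    HasDerivAt (fun σ : ℝ => F (x, σ)) (dv eT F (x,t)) t := by
  have h1 : HasFDerivAt F (fderiv ℝ F (x,t)) (x,t) := by
    simpa using (hF.differentiable (by simp) _).hasFDerivAt
  have h2 : HasDerivAt (fun σ : ℝ => ((x, σ) : EE n × ℝ)) eT t := by
    unfold eT
    exact HasDerivAt.prodMk (hasDerivAt_const _ _) (hasDerivAt_id _)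
  exact h1.comp_hasDerivAt t h2

lemma grad_sq (f : EE n → ℝ) (x : EE n) :
    ‖gradient f x‖^2 = ∑ i, (dv (EuclideanSpace.single i (1:ℝ)) f x)^2 := by
  rw [EuclideanSpace.norm_sq_eq]
  refine Finset.sum_congr rfl fun i _ => ?_
  have : dv (EuclideanSpace.single i (1:ℝ)) f x = gradient f x i := by
    unfold dv
    rw [← toDual_gradient, InnerProductSpace.toDual_apply_apply, EuclideanSpace.inner_single_right]
    simp
  rw [this]; simp

/-- Polynomial growth in space, uniformly for times in a set. -/

def PG (y : EE n) (S : Set ℝ) (h : EE n → ℝ → ℝ) : Prop :=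
  ∃ M : ℝ, 0 ≤ M ∧ ∃ k : ℕ, ∀ x, ∀ t ∈ S, |h x t| ≤ M * (1 + dist x y)^k

lemma PG.of_bdd {y : EE n} {S : Set ℝ} {h : EE n → ℝ → ℝ} {C : ℝ}
    (H : ∀ x, ∀ t ∈ S, |h x t| ≤ C) : PG y S h :=
  ⟨|C|, abs_nonneg _, 0, fun x t ht => by simpa using (H x t ht).trans (le_abs_self C)⟩

lemma PG.const {y : EE n} {S : Set ℝ} (c : ℝ) : PG y S (fun _ _ => c) :=
  PG.of_bdd (C := |c|) (by intros; exact le_rfl)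

lemma PG.mul {y : EE n} {S : Set ℝ} {g h : EE n → ℝ → ℝ} (hg : PG y S g) (hh : PG y S h) :
    PG y S (fun x t => g x t * h x t) := by
  obtain ⟨M, hM, k, H⟩ := hg
  obtain ⟨N, hN, l, K⟩ := hh
  refine ⟨M*N, by positivity, k+l, fun x t ht => ?_⟩
  rw [abs_mul, pow_add]
  calc _ ≤ (M * (1 + dist x y)^k) * (N * (1 + dist x y)^l) := by
        gcongr
        · exact H x t ht
        · exact K x t ht
    _ = _ := by ring

lemma PG.add {y : EE n} {S : Set ℝ} {g h : EE n → ℝ → ℝ} (hg : PG y S g) (hh : PG y S h) :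
    PG y S (fun x t => g x t + h x t) := by
  obtain ⟨M, hM, k, H⟩ := hg
  obtain ⟨N, hN, l, K⟩ := hh
  refine ⟨M+N, by positivity, k+l, fun x t ht => ?_⟩
  have h1 : (1:ℝ) ≤ 1 + dist x y := by linarith [dist_nonneg (x := x) (y := y)]
  have h2 : (1 + dist x y)^k ≤ (1 + dist x y)^(k+l) := pow_le_pow_right₀ h1 (by omega)
  have h3 : (1 + dist x y)^l ≤ (1 + dist x y)^(k+l) := pow_le_pow_right₀ h1 (by omega)
  calc _ ≤ |g x t| + |h x t| := abs_add_le _ _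
    _ ≤ (M * (1 + dist x y)^k) + (N * (1 + dist x y)^l) := add_le_add (H x t ht) (K x t ht)
    _ ≤ (M * (1 + dist x y)^(k+l)) + (N * (1 + dist x y)^(k+l)) := by gcongr
    _ = _ := by ring

lemma PG.neg {y : EE n} {S : Set ℝ} {g : EE n → ℝ → ℝ} (hg : PG y S g) :
    PG y S (fun x t => - g x t) := by
  obtain ⟨M, hM, k, H⟩ := hg
  exact ⟨M, hM, k, by simpa using H⟩

lemma PG.sub {y : EE n} {S : Set ℝ} {g h : EE n → ℝ → ℝ} (hg : PG y S g) (hh : PG y S h) :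
    PG y S (fun x t => g x t - h x t) := by
  simpa [sub_eq_add_neg] using hg.add hh.neg

lemma PG.pow {y : EE n} {S : Set ℝ} {g : EE n → ℝ → ℝ} (hg : PG y S g) (m : ℕ) :
    PG y S (fun x t => g x t ^ m) := by
  induction m with
  | zero => simpa using PG.const 1
  | succ m ih => simpa [pow_succ] using ih.mul hg

lemma PG.sum {y : EE n} {S : Set ℝ} {ι : Type*} (s : Finset ι) {g : ι → EE n → ℝ → ℝ}
    (hg : ∀ i, PG y S (g i)) :
    PG y S (fun x t => ∑ i ∈ s, g i x t) := by
  classical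
  induction s using Finset.induction_on with
  | empty => simpa using PG.const 0
  | insert a s ha ih => simpa [Finset.sum_insert ha] using (hg a).add ih

lemma PG.coord {y : EE n} {S : Set ℝ} (i : Fin n) : PG y S (fun x _ => x i - y i) := by
  refine ⟨1, by norm_num, 1, fun x t _ => ?_⟩
  have := PiLp.norm_apply_le (x - y) i
  simp only [PiLp.sub_apply, Real.norm_eq_abs] at this
  rw [dist_eq_norm]; linarith

lemma PG.inv_time {y : EE n} {t₁ t₂ s : ℝ} (h : t₂ < s) :
    PG y (Set.Icc t₁ t₂) (fun _ t => (2 * (s - t))⁻¹) := by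
  refine PG.of_bdd (C := (2 * (s - t₂))⁻¹) fun x t ht => ?_
  have : s - t₂ ≤ s - t := by linarith [ht.2]
  have h' : 0 < s - t₂ := by linarith
  rw [abs_of_nonneg (by have : 0 < s - t := by linarith
                        positivity)]
  gcongr

lemma gauss_int (y : EE n) {b : ℝ} (hb : 0 < b) :
    Integrable (fun x : EE n => Real.exp (-b * dist x y ^ 2)) := by
  have h := (GaussianFourier.integrable_cexp_neg_mul_sq_norm_add (V := EE n) (b := (b:ℂ)) (by simpa using hb) 0 0).norm
  have h2 : Integrable (fun x : EE n => Real.exp (-b * ‖x‖ ^ 2)) := by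
    refine h.congr (Filter.Eventually.of_forall fun x => ?_)
    simp only [Complex.norm_exp]
    congr 1
    simp [← Complex.ofReal_pow]
  simpa [dist_eq_norm] using h2.comp_sub_right y

lemma poly_gauss_int (y : EE n) {b : ℝ} (hb : 0 < b) (M : ℝ) (k : ℕ) :
    Integrable (fun x : EE n => M * (1 + dist x y)^k * Real.exp (-b * dist x y ^ 2)) := by
  refine Integrable.mono' ((gauss_int y (half_pos hb)).const_mul
    (|M| * (k.factorial * Real.exp (1 + 1 / (2*b))))) ?_ (Filter.Eventually.of_forall fun x => ?_)
  · exact Continuous.aestronglyMeasurable (by fun_prop)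
  · have hr : 0 ≤ dist x y := dist_nonneg
    set r := dist x y
    rw [norm_mul, norm_mul, Real.norm_eq_abs, Real.norm_eq_abs, Real.norm_eq_abs,
      abs_of_nonneg (by positivity : 0 ≤ (1+r)^k), abs_of_pos (Real.exp_pos _)]
    have h1 : (1+r)^k ≤ k.factorial * Real.exp (1+r) := by
      have := Real.pow_div_factorial_le_exp (1+r) (by positivity) k
      rw [div_le_iff₀ (by positivity)] at this
      linarith
    have h2 : 1 + r ≤ 1 + 1/(2*b) + b/2 * r^2 := by
      have : 0 ≤ (b * r - 1)^2 / (2*b) := by positivity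
      have h3 : (b * r - 1)^2 / (2*b) = b/2*r^2 - r + 1/(2*b) := by field_simp; ring
      linarith
    calc |M| * (1+r)^k * Real.exp (-b * r^2)
        ≤ |M| * (k.factorial * Real.exp (1 + 1/(2*b) + b/2 * r^2)) * Real.exp (-b * r^2) := by
          gcongr
          exact h1.trans (by gcongr)
      _ = _ := by
          rw [Real.exp_add]
          have : Real.exp (b/2*r^2) * Real.exp (-b*r^2) = Real.exp (-(b/2) * r^2) := by
            rw [← Real.exp_add]; congr 1; ring
          rw [← this]; ring

end

section
variable {n : ℕ}

noncomputable def en (ε : ℝ) (U : EE n × ℝ → ℝ) (p : EE n × ℝ) : ℝ :=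
  ε / 2 * ∑ i, (dv (eS i) U p) ^ 2 + 1 / ε * (1 / 2 * (1 - (U p) ^ 2) ^ 2)

noncomputable def ph (y : EE n) (s : ℝ) (x : EE n) (t : ℝ) : ℝ :=
  (4 * Real.pi * (s - t)) ^ (-(((n : ℝ) - 1) / 2)) * Real.exp (-(dist x y) ^ 2 / (4 * (s - t)))

noncomputable def wf (U : EE n × ℝ → ℝ) (y : EE n) (s : ℝ) (x : EE n) (t : ℝ) : ℝ :=
  ∑ j, dv (eS j) U (x, t) * ((x j - y j) * (2 * (s - t))⁻¹)

noncomputable def hX (ε : ℝ) (U : EE n × ℝ → ℝ) (y : EE n) (s : ℝ) (i : Fin n) (x : EE n) (t : ℝ) : ℝ :=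
  ε * (dv eT U (x, t) - wf U y s x t) * dv (eS i) U (x, t)
    + en ε U (x, t) * ((x i - y i) * (2 * (s - t))⁻¹)

/-- the derivative of the double-well potential along U -/
noncomputable def fp (U : EE n × ℝ → ℝ) (p : EE n × ℝ) : ℝ := 2 * U p * (U p ^ 2 - 1)

noncomputable def hXd (ε : ℝ) (U : EE n × ℝ → ℝ) (y : EE n) (s : ℝ) (i : Fin n) (x : EE n) (t : ℝ) : ℝ :=
  -((x i - y i) * (2 * (s - t))⁻¹) * hX ε U y s i x t
  + (ε * (dv (eS i) (dv eT U) (x, t)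
      - (∑ j, dv (eS i) (dv (eS j) U) (x, t) * ((x j - y j) * (2 * (s - t))⁻¹)
          + dv (eS i) U (x, t) * (2 * (s - t))⁻¹)) * dv (eS i) U (x, t)
    + ε * (dv eT U (x, t) - wf U y s x t) * dv (eS i) (dv (eS i) U) (x, t)
    + (ε * ∑ j, dv (eS j) U (x, t) * dv (eS i) (dv (eS j) U) (x, t)
        + 1 / ε * (fp U (x, t) * dv (eS i) U (x, t))) * ((x i - y i) * (2 * (s - t))⁻¹)
    + en ε U (x, t) * (2 * (s - t))⁻¹)

noncomputable def gt (ε : ℝ) (U : EE n × ℝ → ℝ) (y : EE n) (s : ℝ) (x : EE n) (t : ℝ) : ℝ :=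
  ε * ∑ j, dv (eS j) U (x, t) * dv (eS j) (dv eT U) (x, t)
    + 1 / ε * (fp U (x, t) * dv eT U (x, t))
    + en ε U (x, t) * (((n : ℝ) - 1) * (2 * (s - t))⁻¹
        - (∑ j, (x j - y j) ^ 2) * (2 * (s - t))⁻¹ ^ 2)

lemma coord_deriv (x y : EE n) (i j : Fin n) :
    HasDerivAt (fun σ : ℝ => (x + σ • EuclideanSpace.single i (1:ℝ) : EE n) j - y j)
      (if j = i then 1 else 0) 0 := by
  have h : HasDerivAt (fun σ : ℝ => x j + σ * (if j = i then (1:ℝ) else 0) - y j)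
      (if j = i then 1 else 0) 0 := by
    simpa using (((hasDerivAt_id (0:ℝ)).mul_const (if j = i then (1:ℝ) else 0)).const_add (x j)).sub_const (y j)
  convert h using 2 with σ
  simp

lemma dist_sq_eq (x y : EE n) : dist x y ^ 2 = ∑ j, (x j - y j) ^ 2 := by
  rw [dist_eq_norm, EuclideanSpace.norm_sq_eq]
  simp

lemma ph_deriv_S (y : EE n) (s : ℝ) (x : EE n) (t : ℝ) (i : Fin n) :
    HasDerivAt (fun σ : ℝ => ph y s (x + σ • EuclideanSpace.single i (1:ℝ)) t)
      (ph y s x t * (-((x i - y i) * (2 * (s - t))⁻¹))) 0 := by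
  unfold ph
  have h1 : HasDerivAt (fun σ : ℝ => dist (x + σ • EuclideanSpace.single i (1:ℝ)) y ^ 2)
      (2 * (x i - y i)) 0 := by
    simp_rw [dist_sq_eq]
    have := HasDerivAt.fun_sum (u := Finset.univ) fun (j : Fin n) _ => (coord_deriv x y i j).pow 2
    refine HasDerivAt.congr_deriv this ?_
    simp
  have h2 := ((h1.neg.div_const (4 * (s - t))).exp).const_mul
    ((4 * Real.pi * (s - t)) ^ (-(((n : ℝ) - 1) / 2)))
  refine HasDerivAt.congr_deriv h2 ?_
  simp only [zero_smul, add_zero, Pi.neg_apply]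
  rcases eq_or_ne (s - t) 0 with h | h
  · simp [h]
  · field_simp
    ring

lemma en_deriv (ε : ℝ) {U : EE n × ℝ → ℝ} {γ : ℝ → EE n × ℝ} {σ₀ : ℝ} {v : EE n × ℝ} 
    (hγ : ∀ F : EE n × ℝ → ℝ, ContDiff ℝ (⊤ : ℕ∞) F → HasDerivAt (fun σ => F (γ σ)) (dv v F (γ σ₀)) σ₀)
    (hU : ContDiff ℝ (⊤ : ℕ∞) U) :
    HasDerivAt (fun σ : ℝ => en ε U (γ σ))
      (ε * ∑ j, dv (eS j) U (γ σ₀) * dv v (dv (eS j) U) (γ σ₀) + 1 / ε * (fp U (γ σ₀) * dv v U (γ σ₀))) σ₀ := by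
  unfold en
  have h1 := HasDerivAt.fun_sum (u := Finset.univ) fun (j : Fin n) _ => (hγ _ (dv_smooth (eS j) hU)).pow 2
  have h2 := (((((hγ _ hU).pow 2).const_sub 1).pow 2).const_mul (1/2)).const_mul (1/ε)
  refine HasDerivAt.congr_deriv ((h1.const_mul (ε/2)).add h2) ?_
  unfold fp
  congr 1
  · rw [Finset.mul_sum, Finset.mul_sum]
    refine Finset.sum_congr rfl fun j _ => ?_
    simp; ring
  · simp; ring

lemma L1 (ε : ℝ) {U : EE n × ℝ → ℝ} (hU : ContDiff ℝ (⊤ : ℕ∞) U) (y : EE n) (s : ℝ) (i : Fin n)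
    (x : EE n) (t : ℝ) :
    HasLineDerivAt ℝ (fun x => ph y s x t * hX ε U y s i x t) (ph y s x t * hXd ε U y s i x t) x
      (EuclideanSpace.single i (1:ℝ)) := by
  unfold HasLineDerivAt
  have hγ : ∀ F : EE n × ℝ → ℝ, ContDiff ℝ (⊤ : ℕ∞) F →
      HasDerivAt (fun σ : ℝ => F (x + σ • EuclideanSpace.single i (1:ℝ), t))
        (dv (eS i) F ((fun σ : ℝ => (x + σ • EuclideanSpace.single i (1:ℝ), t)) 0)) 0 := by
    intro F hF
    simpa using hasDeriv_S hF i x t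
  have he := en_deriv ε hγ hU
  simp only [zero_smul, add_zero] at he
  have hz := fun j => (coord_deriv x y i j).mul_const (2 * (s - t))⁻¹
  have hw : HasDerivAt (fun σ : ℝ => wf U y s (x + σ • EuclideanSpace.single i (1:ℝ)) t)
      (∑ j, dv (eS i) (dv (eS j) U) (x, t) * ((x j - y j) * (2 * (s - t))⁻¹)
          + dv (eS i) U (x, t) * (2 * (s - t))⁻¹) 0 := by
    unfold wf
    have := HasDerivAt.fun_sum (u := Finset.univ) fun (j : Fin n) _ =>
      (hasDeriv_S (dv_smooth (eS j) hU) i x t).mul (hz j)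
    refine HasDerivAt.congr_deriv this ?_
    rw [Finset.sum_add_distrib]
    simp
  have hh := ((((hasDeriv_S (dv_smooth eT hU) i x t).sub hw).const_mul ε).mul
    (hasDeriv_S (dv_smooth (eS i) hU) i x t)).add (he.mul (hz i))
  have := (ph_deriv_S y s x t i).mul hh
  refine HasDerivAt.congr_deriv this ?_
  unfold hXd hX
  simp only [zero_smul, add_zero, Pi.mul_apply, Pi.add_apply, Pi.sub_apply, if_true, one_mul]
  ring

lemma L2 (ε : ℝ) {U : EE n × ℝ → ℝ} (hU : ContDiff ℝ (⊤ : ℕ∞) U) (y : EE n) (s : ℝ)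
    (x : EE n) (t : ℝ) (ht : t < s) :
    HasDerivAt (fun t => ph y s x t * en ε U (x, t)) (ph y s x t * gt ε U y s x t) t := by
  have he := en_deriv ε (γ := fun t => (x, t)) (σ₀ := t) (fun F hF => hasDeriv_T hF x t) hU
  have hst : 0 < s - t := by linarith
  have hp : HasDerivAt (fun t => ph y s x t) (ph y s x t * (((n : ℝ) - 1) * (2 * (s - t))⁻¹
        - (∑ j, (x j - y j) ^ 2) * (2 * (s - t))⁻¹ ^ 2)) t := by
    unfold ph
    have h0 : HasDerivAt (fun t => s - t) (-1) t := by simpa using (hasDerivAt_id t).const_sub s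
    have h1 := (h0.const_mul (4 * Real.pi)).rpow_const (p := -(((n : ℝ) - 1) / 2))
      (Or.inl (by positivity))
    have h2 := ((hasDerivAt_const t (-(dist x y)^2)).div (h0.const_mul 4) (by positivity)).exp
    refine HasDerivAt.congr_deriv (h1.mul h2) ?_
    rw [← dist_sq_eq, Real.rpow_sub_one (by positivity)]
    simp only [Pi.div_apply]
    field_simp
    ring
  refine HasDerivAt.congr_deriv (hp.mul he) ?_
  unfold gt
  simp_rw [fun j => dv_comm (eS j) eT hU (x, t)]
  ring

lemma L3 (ε : ℝ) (hε : 0 < ε) {U : EE n × ℝ → ℝ} (hU : ContDiff ℝ (⊤ : ℕ∞) U) (y : EE n) (s : ℝ)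
    (x : EE n) (t : ℝ)
    (hpde : dv eT U (x, t) = ∑ i, dv (eS i) (dv (eS i) U) (x, t) - 1 / ε ^ 2 * fp U (x, t)) :
    gt ε U y s x t - ∑ i, hXd ε U y s i x t
      = (ε / 2 * ∑ i, (dv (eS i) U (x, t)) ^ 2 - 1 / ε * (1 / 2 * (1 - (U (x, t)) ^ 2) ^ 2))
          * (2 * (s - t))⁻¹ - ε * (dv eT U (x, t) - wf U y s x t) ^ 2 := by
  set a := (2 * (s - t))⁻¹ with ha
  set w := wf U y s x t with hw
  set ut := dv eT U (x, t) with hut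
  set e := en ε U (x, t) with he
  set f := fp U (x, t) with hf
  have hdbl : ∑ i, (∑ j, dv (eS i) (dv (eS j) U) (x, t) * ((x j - y j) * a)) * dv (eS i) U (x, t)
      = ∑ i, (∑ j, dv (eS j) U (x, t) * dv (eS i) (dv (eS j) U) (x, t)) * ((x i - y i) * a) := by
    simp_rw [Finset.sum_mul]
    rw [Finset.sum_comm]
    refine Finset.sum_congr rfl fun i _ => Finset.sum_congr rfl fun j _ => ?_
    rw [dv_comm (eS i) (eS j) hU]
    ring
  have hw' : w = ∑ j, dv (eS j) U (x, t) * ((x j - y j) * a) := rfl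
  have hsum : ∑ i, hXd ε U y s i x t = 
      - ε * (ut - w) * w - e * (∑ j, (x j - y j) ^ 2) * a ^ 2
      + ε * ∑ j, dv (eS j) U (x, t) * dv (eS j) (dv eT U) (x, t)
      - ε * ∑ i, (∑ j, dv (eS i) (dv (eS j) U) (x, t) * ((x j - y j) * a)) * dv (eS i) U (x, t)
      - ε * (∑ i, (dv (eS i) U (x, t)) ^ 2) * a
      + ε * (ut - w) * ∑ i, dv (eS i) (dv (eS i) U) (x, t)
      + ε * ∑ i, (∑ j, dv (eS j) U (x, t) * dv (eS i) (dv (eS j) U) (x, t)) * ((x i - y i) * a)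
      + 1 / ε * f * w + n * (e * a) := by
    have hi : ∀ i : Fin n, hXd ε U y s i x t =
        (-ε * (ut - w)) * (dv (eS i) U (x, t) * ((x i - y i) * a)) + (-(e * a ^ 2)) * (x i - y i) ^ 2
        + ε * (dv (eS i) U (x, t) * dv (eS i) (dv eT U) (x, t))
        + (-ε) * ((∑ j, dv (eS i) (dv (eS j) U) (x, t) * ((x j - y j) * a)) * dv (eS i) U (x, t))
        + (-ε * a) * (dv (eS i) U (x, t)) ^ 2
        + ε * (ut - w) * dv (eS i) (dv (eS i) U) (x, t)
        + ε * ((∑ j, dv (eS j) U (x, t) * dv (eS i) (dv (eS j) U) (x, t)) * ((x i - y i) * a))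
        + 1 / ε * f * (dv (eS i) U (x, t) * ((x i - y i) * a)) + e * a := by
      intro i
      unfold hXd hX
      rw [← ha, ← hut, ← he, ← hf, ← hw]
      ring
    simp_rw [hi]
    simp only [Finset.sum_add_distrib, ← Finset.mul_sum, ← hw']
    simp only [Finset.sum_const, Finset.card_univ, Fintype.card_fin, nsmul_eq_mul]
    ring
  have hlap : ∑ i, dv (eS i) (dv (eS i) U) (x, t) = ut + 1 / ε ^ 2 * f := by rw [hpde]; ring
  rw [hsum, hdbl, hlap]
  unfold gt
  rw [← ha, ← hut, ← he, ← hf, he, en]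
  field_simp
  ring

end

section
variable {n : ℕ}

lemma ph_nonneg (y : EE n) (s : ℝ) (x : EE n) (t : ℝ) (ht : t < s) : 0 ≤ ph y s x t := by
  unfold ph
  have : 0 < s - t := by linarith
  positivity

lemma dom (hn : 1 ≤ n) {y : EE n} {t₁ t₂ s : ℝ} (h2 : t₂ < s) {h : EE n → ℝ → ℝ}
    (hh : PG y (Set.Icc t₁ t₂) h) :
    ∃ B : EE n → ℝ, Integrable B ∧ ∀ x, ∀ t ∈ Set.Icc t₁ t₂, |ph y s x t * h x t| ≤ B x := by
  by_cases h1 : t₁ ≤ t₂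
  swap
  · refine ⟨fun _ => 0, by simp, fun x t ht => ?_⟩
    exact absurd (ht.1.trans ht.2) h1
  obtain ⟨M, hM, k, H⟩ := hh
  have hs1 : 0 < s - t₁ := by linarith
  have hs2 : 0 < s - t₂ := by linarith
  refine ⟨_, poly_gauss_int y (b := 1 / (4 * (s - t₁))) (by positivity)
    ((4 * Real.pi * (s - t₂)) ^ (-(((n : ℝ) - 1) / 2)) * M) k, fun x t ht => ?_⟩
  have hst : 0 < s - t := by linarith [ht.2]
  have hn' : (1:ℝ) ≤ n := by exact_mod_cast hn
  rw [abs_mul, abs_of_nonneg (ph_nonneg y s x t (by linarith))]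
  unfold ph
  have e1 : (4 * Real.pi * (s - t)) ^ (-(((n : ℝ) - 1) / 2))
      ≤ (4 * Real.pi * (s - t₂)) ^ (-(((n : ℝ) - 1) / 2)) := by
    apply Real.rpow_le_rpow_of_nonpos (by positivity)
    · have := ht.2
      gcongr
    · linarith
  have e2 : Real.exp (-(dist x y) ^ 2 / (4 * (s - t))) ≤ Real.exp (-(1 / (4 * (s - t₁))) * dist x y ^ 2) := by
    apply Real.exp_le_exp.2
    have := ht.1
    have h3 : 1 / (4 * (s - t₁)) ≤ 1 / (4 * (s - t)) := by gcongr
    have h4 := mul_le_mul_of_nonneg_right h3 (sq_nonneg (dist x y))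
    have h5 : -(dist x y) ^ 2 / (4 * (s - t)) = -(1 / (4 * (s - t)) * dist x y ^ 2) := by ring
    rw [h5]; linarith
  calc _ ≤ ((4 * Real.pi * (s - t₂)) ^ (-(((n : ℝ) - 1) / 2)) * Real.exp (-(1 / (4 * (s - t₁))) * dist x y ^ 2))
        * (M * (1 + dist x y)^k) := by
        gcongr
        exact H x t ht
    _ = _ := by ring

structure Bd (U : EE n × ℝ → ℝ) (S : Set ℝ) (C : ℝ) : Prop where
  b0 : ∀ x, ∀ t ∈ S, |U (x, t)| ≤ C
  b1 : ∀ i, ∀ x, ∀ t ∈ S, |dv (eS i) U (x, t)| ≤ C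
  b2 : ∀ i j, ∀ x, ∀ t ∈ S, |dv (eS i) (dv (eS j) U) (x, t)| ≤ C
  bt : ∀ x, ∀ t ∈ S, |dv eT U (x, t)| ≤ C
  bti : ∀ i, ∀ x, ∀ t ∈ S, |dv (eS i) (dv eT U) (x, t)| ≤ C

section growth
variable {U : EE n × ℝ → ℝ} {t₁ t₂ s C : ℝ} {y : EE n}

lemma pg_en (ε : ℝ) (H : Bd U (Set.Icc t₁ t₂) C) :
    PG y (Set.Icc t₁ t₂) (fun x t => en ε U (x, t)) := by
  unfold en
  exact ((PG.const _).mul (PG.sum _ fun i => (PG.of_bdd (H.b1 i)).pow 2)).add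
    ((PG.const _).mul ((PG.const _).mul (((PG.const _).sub ((PG.of_bdd H.b0).pow 2)).pow 2)))

lemma pg_fp (H : Bd U (Set.Icc t₁ t₂) C) :
    PG y (Set.Icc t₁ t₂) (fun x t => fp U (x, t)) := by
  unfold fp
  exact ((PG.const _).mul (PG.of_bdd H.b0)).mul (((PG.of_bdd H.b0).pow 2).sub (PG.const _))

lemma pg_za (h2 : t₂ < s) (i : Fin n) :
    PG y (Set.Icc t₁ t₂) (fun x t => (x i - y i) * (2 * (s - t))⁻¹) :=
  (PG.coord i).mul (PG.inv_time h2)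

lemma pg_wf (h2 : t₂ < s) (H : Bd U (Set.Icc t₁ t₂) C) :
    PG y (Set.Icc t₁ t₂) (fun x t => wf U y s x t) := by
  unfold wf
  exact PG.sum _ fun j => (PG.of_bdd (H.b1 j)).mul (pg_za h2 j)

lemma pg_hX (ε : ℝ) (h2 : t₂ < s) (H : Bd U (Set.Icc t₁ t₂) C) (i : Fin n) :
    PG y (Set.Icc t₁ t₂) (fun x t => hX ε U y s i x t) := by
  unfold hX
  exact (((PG.const _).mul ((PG.of_bdd H.bt).sub (pg_wf h2 H))).mul (PG.of_bdd (H.b1 i))).add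
    ((pg_en ε H).mul (pg_za h2 i))

lemma pg_hXd (ε : ℝ) (h2 : t₂ < s) (H : Bd U (Set.Icc t₁ t₂) C) (i : Fin n) :
    PG y (Set.Icc t₁ t₂) (fun x t => hXd ε U y s i x t) := by
  unfold hXd
  refine ((pg_za h2 i).neg.mul (pg_hX ε h2 H i)).add (((PG.add ?_ ?_).add ?_).add ?_)
  · exact ((PG.const _).mul ((PG.of_bdd (H.bti i)).sub ((PG.sum _ fun j =>
      (PG.of_bdd (H.b2 i j)).mul (pg_za h2 j)).add ((PG.of_bdd (H.b1 i)).mul (PG.inv_time h2))))).mul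
        (PG.of_bdd (H.b1 i))
  · exact ((PG.const _).mul ((PG.of_bdd H.bt).sub (pg_wf h2 H))).mul (PG.of_bdd (H.b2 i i))
  · exact (((PG.const _).mul (PG.sum _ fun j => (PG.of_bdd (H.b1 j)).mul (PG.of_bdd (H.b2 i j)))).add
      ((PG.const _).mul ((pg_fp H).mul (PG.of_bdd (H.b1 i))))).mul (pg_za h2 i)
  · exact (pg_en ε H).mul (PG.inv_time h2)

lemma pg_gt (ε : ℝ) (h2 : t₂ < s) (H : Bd U (Set.Icc t₁ t₂) C) :
    PG y (Set.Icc t₁ t₂) (fun x t => gt ε U y s x t) := by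
  unfold gt
  exact (((PG.const _).mul (PG.sum _ fun j => (PG.of_bdd (H.b1 j)).mul (PG.of_bdd (H.bti j)))).add
    ((PG.const _).mul ((pg_fp H).mul (PG.of_bdd H.bt)))).add
    ((pg_en ε H).mul (((PG.const _).mul (PG.inv_time h2)).sub
      ((PG.sum _ fun j => (PG.coord j).pow 2).mul ((PG.inv_time h2).pow 2))))

end growth

section cont
variable {U : EE n × ℝ → ℝ} 
lemma c_en (hU : ContDiff ℝ (⊤ : ℕ∞) U) (ε : ℝ) : Continuous (en ε U) := by
  unfold en
  have h0 := hU.continuous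
  have h1 := fun i : Fin n => (dv_smooth (eS i) hU).continuous
  fun_prop

lemma c_hX (hU : ContDiff ℝ (⊤ : ℕ∞) U) (y : EE n) (s t ε : ℝ) (i : Fin n) : Continuous (fun x => hX ε U y s i x t) := by
  unfold hX wf
  have h0 := hU.continuous
  have h1 := fun i : Fin n => (dv_smooth (eS i) hU).continuous
  have h3 := (dv_smooth eT hU).continuous
  have h2 := c_en hU ε
  fun_prop

lemma c_hXd (hU : ContDiff ℝ (⊤ : ℕ∞) U) (y : EE n) (s t ε : ℝ) (i : Fin n) : Continuous (fun x => hXd ε U y s i x t) := by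
  unfold hXd wf fp
  have h0 := hU.continuous
  have h1 := fun i : Fin n => (dv_smooth (eS i) hU).continuous
  have h3 := (dv_smooth eT hU).continuous
  have h4 := fun i j : Fin n => (dv_smooth (eS i) (dv_smooth (eS j) hU)).continuous
  have h5 := fun i : Fin n => (dv_smooth (eS i) (dv_smooth eT hU)).continuous
  have h2 := c_en hU ε
  have h6 := c_hX hU y s t ε i
  fun_prop

lemma c_gt (hU : ContDiff ℝ (⊤ : ℕ∞) U) (y : EE n) (s t ε : ℝ) : Continuous (fun x => gt ε U y s x t) := by
  unfold gt fp
  have h0 := hU.continuous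
  have h1 := fun i : Fin n => (dv_smooth (eS i) hU).continuous
  have h3 := (dv_smooth eT hU).continuous
  have h5 := fun i : Fin n => (dv_smooth (eS i) (dv_smooth eT hU)).continuous
  have h2 := c_en hU ε
  fun_prop

end cont

lemma c_ph (y : EE n) (s t : ℝ) : Continuous (fun x => ph y s x t) := by
  unfold ph
  fun_prop

lemma int_line_zero {f f' : EE n → ℝ} {v : EE n} (hf : Integrable f) (hf' : Integrable f')
    (h : ∀ x, HasLineDerivAt ℝ f (f' x) x v) : ∫ x, f' x = 0 := by
  have := integral_bilinear_hasLineDerivAt_right_eq_neg_left_of_integrable (μ := volume)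
    (f := f) (f' := f') (g := fun _ => (1:ℝ)) (g' := fun _ => 0) (v := v)
    (B := ContinuousLinearMap.mul ℝ ℝ) (by simpa using hf') (by simp) (by simpa using hf)
    (fun x _ => h x) (fun x _ => by exact hasDerivAt_const _ _)
  simpa using this

lemma anti (hn : 1 ≤ n) (ε : ℝ) (hε : 0 < ε) {U : EE n × ℝ → ℝ} (hU : ContDiff ℝ (⊤ : ℕ∞) U)
    (y : EE n) {t₁ t₂ s C : ℝ} (h2 : t₂ < s) (H : Bd U (Set.Icc t₁ t₂) C)
    (hpde : ∀ x, ∀ t ∈ Set.Icc t₁ t₂,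
      dv eT U (x, t) = ∑ i, dv (eS i) (dv (eS i) U) (x, t) - 1 / ε ^ 2 * fp U (x, t))
    (hdisc : ∀ x, ∀ t ∈ Set.Icc t₁ t₂,
      ε / 2 * ∑ i, (dv (eS i) U (x, t)) ^ 2 ≤ 1 / ε * (1 / 2 * (1 - (U (x, t)) ^ 2) ^ 2)) :
    AntitoneOn (fun t => ∫ x, ph y s x t * en ε U (x, t)) (Set.Icc t₁ t₂) := by
  obtain ⟨B, hB, hBb⟩ := dom (s := s) hn h2 (pg_en (y := y) ε H)
  obtain ⟨B', hB', hBb'⟩ := dom (s := s) hn h2 (pg_gt (y := y) ε h2 H)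
  have cen := c_en hU ε
  have cph := c_ph y s
  have cgt := fun t => c_gt hU y s t ε
  have cF : ∀ t, AEStronglyMeasurable (fun x => ph y s x t * en ε U (x, t)) volume := fun t =>
    ((cph t).mul (cen.comp (by fun_prop))).aestronglyMeasurable
  have cG : ∀ t, AEStronglyMeasurable (fun x => ph y s x t * gt ε U y s x t) volume := fun t =>
    ((cph t).mul (cgt t)).aestronglyMeasurable
  have hder : ∀ t ∈ Set.Ioo t₁ t₂,
      HasDerivAt (fun t => ∫ x, ph y s x t * en ε U (x, t)) (∫ x, ph y s x t * gt ε U y s x t) t := by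
    intro t ht
    refine (hasDerivAt_integral_of_dominated_loc_of_deriv_le (bound := B')
      (F' := fun t x => ph y s x t * gt ε U y s x t)
      (isOpen_Ioo.mem_nhds ht) (Filter.Eventually.of_forall cF)
      (hB.mono' (cF t) (Filter.Eventually.of_forall fun x => ?_)) (cG t)
      (Filter.Eventually.of_forall fun x r hr => ?_) hB'
      (Filter.Eventually.of_forall fun x r hr => ?_)).2
    · exact hBb x t (Set.Ioo_subset_Icc_self ht)
    · exact hBb' x r (Set.Ioo_subset_Icc_self hr)
    · exact L2 ε hU y s x r (by linarith [hr.2])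
  refine antitoneOn_of_deriv_nonpos (convex_Icc _ _) ?_ ?_ ?_
  · refine continuousOn_of_dominated (bound := B) (fun t _ => cF t)
      (fun t ht => Filter.Eventually.of_forall fun x => hBb x t ht) hB
      (Filter.Eventually.of_forall fun x t ht => ?_)
    exact (L2 ε hU y s x t (by linarith [ht.2])).continuousAt.continuousWithinAt
  · rw [interior_Icc]
    exact fun t ht => (hder t ht).differentiableAt.differentiableWithinAt
  · rw [interior_Icc]
    intro t ht
    rw [(hder t ht).deriv]
    have ht' := Set.Ioo_subset_Icc_self ht
    have hst : 0 < s - t := by linarith [ht.2]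
    have i1 : ∀ i, Integrable (fun x => ph y s x t * hX ε U y s i x t) := by
      intro i
      obtain ⟨A, hA, hAb⟩ := dom (s := s) hn h2 (pg_hX (y := y) ε h2 H i)
      exact hA.mono' ((cph t).mul (c_hX hU y s t ε i)).aestronglyMeasurable
        (Filter.Eventually.of_forall fun x => hAb x t ht')
    have i2 : ∀ i, Integrable (fun x => ph y s x t * hXd ε U y s i x t) := by
      intro i
      obtain ⟨A, hA, hAb⟩ := dom (s := s) hn h2 (pg_hXd (y := y) ε h2 H i)
      exact hA.mono' ((cph t).mul (c_hXd hU y s t ε i)).aestronglyMeasurable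
        (Filter.Eventually.of_forall fun x => hAb x t ht')
    have i3 : Integrable (fun x => ph y s x t * gt ε U y s x t) :=
      hB'.mono' (cG t) (Filter.Eventually.of_forall fun x => hBb' x t ht')
    have z : ∫ x, ∑ i, ph y s x t * hXd ε U y s i x t = 0 := by
      rw [integral_finsetSum _ fun i _ => i2 i]
      exact Finset.sum_eq_zero fun i _ => int_line_zero (i1 i) (i2 i) fun x => L1 ε hU y s i x t
    rw [← z]
    refine integral_mono i3 (integrable_finsetSum _ fun i _ => i2 i) fun x => ?_
    simp only
    rw [← Finset.mul_sum]
    refine mul_le_mul_of_nonneg_left ?_ (ph_nonneg y s x t (by linarith))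
    have := L3 ε hε hU y s x t (hpde x t ht')
    have q1 : 0 ≤ (2 * (s - t))⁻¹ := by positivity
    have q2 := mul_nonneg hε.le (sq_nonneg (dv eT U (x, t) - wf U y s x t))
    have q3 := mul_nonpos_of_nonpos_of_nonneg (sub_nonpos.2 (hdisc x t ht')) q1
    linarith

lemma line_third (ε : ℝ) {U : EE n × ℝ → ℝ} (hU : ContDiff ℝ (⊤ : ℕ∞) U) (t : ℝ)
    (hpde : ∀ x,
      dv eT U (x, t) = ∑ i, dv (eS i) (dv (eS i) U) (x, t) - 1 / ε ^ 2 * fp U (x, t))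
    (i : Fin n) (x : EE n) :
    dv (eS i) (dv eT U) (x, t) = ∑ j, dv (eS i) (dv (eS j) (dv (eS j) U)) (x, t)
      - 1 / ε ^ 2 * ((6 * U (x, t) ^ 2 - 2) * dv (eS i) U (x, t)) := by
  have h1 := hasDeriv_S (dv_smooth eT hU) i x t
  have h2 := HasDerivAt.fun_sum (u := Finset.univ) fun (j : Fin n) _ =>
    hasDeriv_S (dv_smooth (eS j) (dv_smooth (eS j) hU)) i x t
  have h0 := hasDeriv_S hU i x t
  have h3 := h2.sub (((h0.const_mul 2).mul ((h0.pow 2).sub_const 1)).const_mul (1 / ε^2))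
  have e : (fun σ : ℝ => dv eT U (x + σ • EuclideanSpace.single i (1:ℝ), t)) = _ :=
    funext fun σ => hpde (x + σ • EuclideanSpace.single i (1:ℝ))
  rw [e] at h1
  rw [h1.unique h3]
  simp
  left
  ring

end
end ACM

/-- Huisken-type monotonicity for the Allen–Cahn equation on `ℝⁿ`: if the discrepancy is
nonpositive at every time, then for every `y` and `0 ≤ t₁ ≤ t₂ < s`,
`∫ ρ_{y,s}(·,t₂) dμ^{t₂} ≤ ∫ ρ_{y,s}(·,t₁) dμ^{t₁}`, where
`ρ_{y,s}(x,t) = (4π(s-t))^{-(n-1)/2} exp(-|x-y|²/(4(s-t)))`. -/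
theorem allen_cahn_monotonicity (n : ℕ) (hn : 1 ≤ n) (ε : ℝ) (hε : 0 < ε)
    (u : EuclideanSpace ℝ (Fin n) → ℝ → ℝ)
    (hsmooth : ContDiff ℝ (⊤ : ℕ∞) (fun p : EuclideanSpace ℝ (Fin n) × ℝ => u p.1 p.2))
    (hu1 : ∀ x t, |u x t| ≤ 1)
    (hpde : ∀ x, ∀ t, 0 ≤ t →
      deriv (u x) t = spaceLaplacian n (fun y => u y t) x
        - (1 / ε ^ 2) * (2 * u x t * ((u x t) ^ 2 - 1)))
    (hbnd : ∀ T > (0 : ℝ), ∃ C : ℝ, ∀ x, ∀ t ∈ Set.Icc (0 : ℝ) T,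
      (∀ i ≤ 3, ‖iteratedFDeriv ℝ i (fun y => u y t) x‖ ≤ C) ∧ |deriv (u x) t| ≤ C)
    (μ : ℝ → Measure (EuclideanSpace ℝ (Fin n)))
    (hμ : ∀ t, μ t = volume.withDensity (fun x =>
      ENNReal.ofReal ((ε / 2) * ‖gradient (fun y => u y t) x‖ ^ 2
        + (1 / ε) * ((1 / 2) * (1 - (u x t) ^ 2) ^ 2))))
    (hdisc : ∀ x, ∀ t, 0 ≤ t →
      (ε / 2) * ‖gradient (fun y => u y t) x‖ ^ 2
        ≤ (1 / ε) * ((1 / 2) * (1 - (u x t) ^ 2) ^ 2)) :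
    ∀ (y : EuclideanSpace ℝ (Fin n)) (t₁ t₂ s : ℝ), 0 ≤ t₁ → t₁ ≤ t₂ → t₂ < s →
      ∫⁻ x, ENNReal.ofReal ((4 * Real.pi * (s - t₂)) ^ (-(((n : ℝ) - 1) / 2)) *
          Real.exp (-(dist x y) ^ 2 / (4 * (s - t₂)))) ∂(μ t₂)
        ≤ ∫⁻ x, ENNReal.ofReal ((4 * Real.pi * (s - t₁)) ^ (-(((n : ℝ) - 1) / 2)) *
            Real.exp (-(dist x y) ^ 2 / (4 * (s - t₁)))) ∂(μ t₁) := by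
  classical
  intro y t₁ t₂ s h0 h12 h2s
  set U : ACM.EE n × ℝ → ℝ := fun p => u p.1 p.2 with hUdef
  have hU : ContDiff ℝ (⊤ : ℕ∞) U := hsmooth
  have s1 : ∀ i x t, ACM.dv (ACM.eS i) U (x, t)
      = ACM.dv (EuclideanSpace.single i (1:ℝ)) (fun y => u y t) x := fun i x t =>
    (ACM.slice_fderiv hU t _ x).symm
  have s2 : ∀ i j x t, ACM.dv (ACM.eS i) (ACM.dv (ACM.eS j) U) (x, t)
      = ACM.dv (EuclideanSpace.single i (1:ℝ))
        (ACM.dv (EuclideanSpace.single j (1:ℝ)) (fun y => u y t)) x := by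
    intro i j x t
    rw [ACM.eS, ← ACM.slice_fderiv (ACM.dv_smooth _ hU)]
    simp_rw [s1]
  have s3 : ∀ i j k x t, ACM.dv (ACM.eS k) (ACM.dv (ACM.eS i) (ACM.dv (ACM.eS j) U)) (x, t)
      = ACM.dv (EuclideanSpace.single k (1:ℝ)) (ACM.dv (EuclideanSpace.single i (1:ℝ))
        (ACM.dv (EuclideanSpace.single j (1:ℝ)) (fun y => u y t))) x := by
    intro i j k x t
    rw [ACM.eS, ← ACM.slice_fderiv (ACM.dv_smooth _ (ACM.dv_smooth _ hU))]
    simp_rw [s2]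
  have st : ∀ x t, ACM.dv ACM.eT U (x, t) = deriv (u x) t := fun x t =>
    (ACM.hasDeriv_T hU x t).deriv.symm
  have hp : ∀ x, ∀ t, 0 ≤ t → ACM.dv ACM.eT U (x, t)
      = ∑ i, ACM.dv (ACM.eS i) (ACM.dv (ACM.eS i) U) (x, t) - 1 / ε ^ 2 * ACM.fp U (x, t) := by
    intro x t ht
    rw [st, hpde x t ht]
    simp_rw [s2]
    rfl
  have hg : ∀ x t, ‖gradient (fun y => u y t) x‖ ^ 2 = ∑ i, (ACM.dv (ACM.eS i) U (x, t)) ^ 2 := by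
    intro x t
    rw [ACM.grad_sq]
    simp_rw [s1]
  have hen : ∀ x t, (ε / 2) * ‖gradient (fun y => u y t) x‖ ^ 2
        + (1 / ε) * ((1 / 2) * (1 - (u x t) ^ 2) ^ 2) = ACM.en ε U (x, t) := by
    intro x t
    rw [hg]; rfl
  obtain ⟨C, hC⟩ := hbnd (t₂ + 1) (by linarith)
  have hmem : ∀ t ∈ Set.Icc t₁ t₂, t ∈ Set.Icc (0:ℝ) (t₂ + 1) := fun t ht =>
    ⟨h0.trans ht.1, by linarith [ht.2]⟩
  have hsl : ∀ t, ContDiff ℝ (⊤ : ℕ∞) (fun y => u y t) := fun t => ACM.slice_smooth hU t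
  have nd : ∀ (i : Fin n) (f : ACM.EE n → ℝ), ContDiff ℝ (⊤ : ℕ∞) f → ∀ k x,
      ‖iteratedFDeriv ℝ k (ACM.dv (EuclideanSpace.single i (1:ℝ)) f) x‖
        ≤ ‖iteratedFDeriv ℝ (k+1) f x‖ := by
    intro i f hf k x
    simpa using ACM.norm_dv (EuclideanSpace.single i (1:ℝ)) hf k x
  have nz : ∀ (f : ACM.EE n → ℝ) x, |f x| = ‖iteratedFDeriv ℝ 0 f x‖ := by
    intro f x; simp
  have b1 : ∀ i x, ∀ t ∈ Set.Icc t₁ t₂, |ACM.dv (ACM.eS i) U (x, t)| ≤ C := by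
    intro i x t ht
    rw [s1, nz]
    exact (nd i _ (hsl t) 0 x).trans ((hC x t (hmem t ht)).1 1 (by norm_num))
  have b2 : ∀ i j x, ∀ t ∈ Set.Icc t₁ t₂,
      |ACM.dv (ACM.eS i) (ACM.dv (ACM.eS j) U) (x, t)| ≤ C := by
    intro i j x t ht
    rw [s2, nz]
    exact (nd i _ (ACM.dv_smooth _ (hsl t)) 0 x).trans
      ((nd j _ (hsl t) 1 x).trans ((hC x t (hmem t ht)).1 2 (by norm_num)))
  have b3 : ∀ k i j x, ∀ t ∈ Set.Icc t₁ t₂,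
      |ACM.dv (ACM.eS k) (ACM.dv (ACM.eS i) (ACM.dv (ACM.eS j) U)) (x, t)| ≤ C := by
    intro k i j x t ht
    rw [s3, nz]
    exact (nd k _ (ACM.dv_smooth _ (ACM.dv_smooth _ (hsl t))) 0 x).trans
      ((nd i _ (ACM.dv_smooth _ (hsl t)) 1 x).trans
      ((nd j _ (hsl t) 2 x).trans ((hC x t (hmem t ht)).1 3 (by norm_num))))
  have hC0 : 0 ≤ C := (norm_nonneg _).trans ((hC y t₁ (hmem t₁ ⟨le_rfl, h12⟩)).1 0 (by norm_num))
  have bti : ∀ i x, ∀ t ∈ Set.Icc t₁ t₂,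
      |ACM.dv (ACM.eS i) (ACM.dv ACM.eT U) (x, t)| ≤ n * C + 1 / ε ^ 2 * (8 * C) := by
    intro i x t ht
    rw [ACM.line_third ε hU t (fun x => hp x t (h0.trans ht.1)) i x]
    refine (abs_sub _ _).trans (add_le_add ?_ ?_)
    · refine (Finset.abs_sum_le_sum_abs _ _).trans ?_
      refine (Finset.sum_le_sum fun j _ => b3 i j j x t ht).trans ?_
      simp
    · rw [abs_mul, abs_mul, abs_of_nonneg (by positivity : 0 ≤ 1 / ε ^ 2)]
      have q : |6 * U (x, t) ^ 2 - 2| ≤ 8 := by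
        have := abs_le.1 (hu1 x t)
        have h : U (x, t) ^ 2 ≤ 1 := by
          show u x t ^ 2 ≤ 1
          nlinarith
        rw [abs_le]
        constructor <;> nlinarith [sq_nonneg (U (x, t))]
      gcongr
      exact b1 i x t ht
  have hle : C ≤ 1 + C + (n * C + 1 / ε ^ 2 * (8 * C)) := by
    have : 0 ≤ n * C + 1 / ε ^ 2 * (8 * C) := by positivity
    linarith
  have H : ACM.Bd U (Set.Icc t₁ t₂) (1 + C + (n * C + 1 / ε ^ 2 * (8 * C))) :=
    { b0 := fun x t ht => (hu1 x t).trans (by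
        have : 0 ≤ n * C + 1 / ε ^ 2 * (8 * C) := by positivity
        linarith)
      b1 := fun i x t ht => (b1 i x t ht).trans hle
      b2 := fun i j x t ht => (b2 i j x t ht).trans hle
      bt := fun x t ht => by
        rw [st]
        exact ((hC x t (hmem t ht)).2).trans hle
      bti := fun i x t ht => (bti i x t ht).trans (by linarith) }
  have hanti := ACM.anti hn ε hε hU y h2s H (fun x t ht => hp x t (h0.trans ht.1))
    (fun x t ht => by
      rw [← hg]
      exact hdisc x t (h0.trans ht.1))
  have key : ∀ t ∈ Set.Icc t₁ t₂,
      ∫⁻ x, ENNReal.ofReal ((4 * Real.pi * (s - t)) ^ (-(((n : ℝ) - 1) / 2)) *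
          Real.exp (-(dist x y) ^ 2 / (4 * (s - t)))) ∂(μ t)
        = ENNReal.ofReal (∫ x, ACM.ph y s x t * ACM.en ε U (x, t)) := by
    intro t ht
    have hts : t < s := by linarith [ht.2]
    rw [hμ t]
    simp_rw [hen]
    have cen : Continuous fun x => ACM.en ε U (x, t) := (ACM.c_en hU ε).comp (by fun_prop)
    have cph := ACM.c_ph y s t
    have hen0 : ∀ x, 0 ≤ ACM.en ε U (x, t) := by
      intro x
      unfold ACM.en
      positivity
    obtain ⟨B, hB, hBb⟩ := ACM.dom (s := s) hn h2s (ACM.pg_en (y := y) ε H)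
    rw [lintegral_withDensity_eq_lintegral_mul _ cen.measurable.ennreal_ofReal
      (by exact cph.measurable.ennreal_ofReal)]
    rw [ofReal_integral_eq_lintegral_ofReal]
    · refine lintegral_congr fun x => ?_
      rw [Pi.mul_apply, ← ENNReal.ofReal_mul (hen0 x), mul_comm]
      rfl
    · exact hB.mono' (cph.mul cen).aestronglyMeasurable
        (Filter.Eventually.of_forall fun x => hBb x t ht)
    · exact Filter.Eventually.of_forall fun x => mul_nonneg (ACM.ph_nonneg y s x t hts) (hen0 x)
  rw [key t₂ ⟨h12, le_rfl⟩, key t₁ ⟨le_rfl, h12⟩]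
  exact ENNReal.ofReal_le_ofReal (hanti ⟨le_rfl, h12⟩ ⟨h12, le_rfl⟩ h12)
end

section
/- Fix n ≥ 1 and ε > 0, and let u : ℝⁿ × [0,∞) → ℝ be a smooth solution of ∂ₜu = Δu − (1/ε²) f(u) with f(u) = 2u(u²−1), |u| ≤ 1, such that for every T > 0 the function u and its spatial derivatives up to third order and its time derivative are uniformly bounded on ℝⁿ × [0,T]. Let μᵗ denote the measure with density (ε/2)|∇u(x,t)|² + (1/ε)F(u(x,t)) with respect to Lebesgue measure, F(u) = (1/2)(1−u²)². Assume (ε/2)|∇u(x,t)|² ≤ (1/ε)F(u(x,t)) for all x ∈ ℝⁿ and t ≥ 0. Then the entropy is nonincreasing along the flow: for all 0 ≤ t₁ ≤ t₂, λ(μ^{t₂}) ≤ λ(μ^{t₁}). -/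
open Real MeasureTheory Metric ENNReal

/-- Polynomial growth in space around `y`, uniformly for times in `I`. -/
def PolyBdd {n : ℕ} (y : EuclideanSpace ℝ (Fin n)) (I : Set ℝ)
    (g : EuclideanSpace ℝ (Fin n) → ℝ → ℝ) : Prop :=
  ∃ C : ℝ, ∃ k : ℕ, 0 ≤ C ∧ ∀ x, ∀ t ∈ I, |g x t| ≤ C * (1 + ‖x - y‖) ^ k

section PolyBddLemmas

variable {n : ℕ} {y : EuclideanSpace ℝ (Fin n)} {I : Set ℝ}
  {g g' : EuclideanSpace ℝ (Fin n) → ℝ → ℝ}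

lemma PolyBdd.of_bdd {C : ℝ} (h : ∀ x, ∀ t ∈ I, |g x t| ≤ C) : PolyBdd y I g := by
  refine ⟨|C|, 0, abs_nonneg _, fun x t ht => ?_⟩
  simpa using (h x t ht).trans (le_abs_self C)

lemma PolyBdd.const (c : ℝ) : PolyBdd y I (fun _ _ => c) :=
  PolyBdd.of_bdd (C := |c|) (fun _ _ _ => le_rfl)

lemma PolyBdd.coord (i : Fin n) : PolyBdd y I (fun x _ => (x - y) i) := by
  refine ⟨1, 1, zero_le_one, fun x t _ => ?_⟩
  have := PiLp.norm_apply_le (x - y) i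
  rw [Real.norm_eq_abs] at this
  simp only [one_mul, pow_one]
  linarith

lemma PolyBdd.mul (h : PolyBdd y I g) (h' : PolyBdd y I g') :
    PolyBdd y I (fun x t => g x t * g' x t) := by
  obtain ⟨C, k, hC, H⟩ := h
  obtain ⟨C', k', hC', H'⟩ := h'
  refine ⟨C * C', k + k', by positivity, fun x t ht => ?_⟩
  rw [abs_mul]
  calc _ ≤ (C * (1 + ‖x - y‖) ^ k) * (C' * (1 + ‖x - y‖) ^ k') :=
        mul_le_mul (H x t ht) (H' x t ht) (abs_nonneg _) (by positivity)
    _ = _ := by ring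

lemma PolyBdd.add (h : PolyBdd y I g) (h' : PolyBdd y I g') :
    PolyBdd y I (fun x t => g x t + g' x t) := by
  obtain ⟨C, k, hC, H⟩ := h
  obtain ⟨C', k', hC', H'⟩ := h'
  refine ⟨C + C', k + k', by positivity, fun x t ht => ?_⟩
  have h1 : (1 + ‖x - y‖) ^ k ≤ (1 + ‖x - y‖) ^ (k + k') :=
    pow_le_pow_right₀ (by linarith [norm_nonneg (x - y)]) (by omega)
  have h2 : (1 + ‖x - y‖) ^ k' ≤ (1 + ‖x - y‖) ^ (k + k') :=
    pow_le_pow_right₀ (by linarith [norm_nonneg (x - y)]) (by omega)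
  have h3 := mul_le_mul_of_nonneg_left h1 hC
  have h4 := mul_le_mul_of_nonneg_left h2 hC'
  have := abs_add_le (g x t) (g' x t)
  linarith [H x t ht, H' x t ht]

lemma PolyBdd.neg (h : PolyBdd y I g) : PolyBdd y I (fun x t => - g x t) := by
  obtain ⟨C, k, hC, H⟩ := h
  exact ⟨C, k, hC, fun x t ht => by simpa using H x t ht⟩

lemma PolyBdd.sub (h : PolyBdd y I g) (h' : PolyBdd y I g') :
    PolyBdd y I (fun x t => g x t - g' x t) := by
  simpa [sub_eq_add_neg] using h.add h'.neg

lemma PolyBdd.pow (h : PolyBdd y I g) (m : ℕ) : PolyBdd y I (fun x t => g x t ^ m) := by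
  induction m with
  | zero => simpa using PolyBdd.const 1
  | succ m ih => simpa [pow_succ] using ih.mul h

lemma PolyBdd.sum {ι : Type*} (s : Finset ι) {G : ι → EuclideanSpace ℝ (Fin n) → ℝ → ℝ}
    (h : ∀ i ∈ s, PolyBdd y I (G i)) : PolyBdd y I (fun x t => ∑ i ∈ s, G i x t) := by
  classical
  induction s using Finset.induction_on with
  | empty => simpa using PolyBdd.const 0
  | insert a s ha ih =>
    simp only [Finset.sum_insert ha]
    exact (h a (by simp)).add (ih fun i hi => h i (by simp [hi]))

end PolyBddLemmas

/-- Gaussians beat polynomials. -/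
lemma poly_mul_exp_le (k : ℕ) (b : ℝ) (hb : 0 < b) :
    ∃ M : ℝ, 0 ≤ M ∧ ∀ r : ℝ, 0 ≤ r → (1 + r) ^ k * Real.exp (-b * r ^ 2) ≤
      M * Real.exp (-(b / 2) * r ^ 2) := by
  -- (1+r)^k ≤ k! * exp(1+r), and 1 + r ≤ 1 + 1/(2b) + b/2 r^2
  refine ⟨(k.factorial : ℝ) * Real.exp (1 + 1 / (2 * b)), by positivity, fun r hr => ?_⟩
  have h1 : (1 + r) ^ k ≤ (k.factorial : ℝ) * Real.exp (1 + r) := by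
    have := Real.pow_div_factorial_le_exp (1 + r) (by linarith) k
    rw [div_le_iff₀ (by positivity)] at this
    linarith
  have h2 : r ≤ 1 / (2 * b) + b / 2 * r ^ 2 := by
    have h3 : 0 ≤ (b * r - 1) ^ 2 / (2 * b) := by positivity
    have h4 : (b * r - 1) ^ 2 / (2 * b) = 1 / (2 * b) + b / 2 * r ^ 2 - r := by
      field_simp; ring
    linarith
  calc (1 + r) ^ k * Real.exp (-b * r ^ 2)
      ≤ ((k.factorial : ℝ) * Real.exp (1 + r)) * Real.exp (-b * r ^ 2) := by gcongr
    _ = (k.factorial : ℝ) * Real.exp (1 + r + -b * r ^ 2) := by rw [Real.exp_add (1 + r)]; ring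
    _ ≤ (k.factorial : ℝ) * Real.exp ((1 + 1 / (2 * b)) + -(b / 2) * r ^ 2) := by
        have : 1 + r + -b * r ^ 2 ≤ (1 + 1 / (2 * b)) + -(b / 2) * r ^ 2 := by linarith
        exact mul_le_mul_of_nonneg_left (Real.exp_le_exp.mpr this) (by positivity)
    _ = _ := by rw [Real.exp_add (1 + 1 / (2 * b))]; ring

lemma integrable_exp_norm_sq {n : ℕ} (y : EuclideanSpace ℝ (Fin n)) (b : ℝ) (hb : 0 < b) :
    Integrable (fun x : EuclideanSpace ℝ (Fin n) => Real.exp (-b * ‖x - y‖ ^ 2)) := by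
  have h := (GaussianFourier.integrable_cexp_neg_mul_sq_norm_add (V := EuclideanSpace ℝ (Fin n))
    (b := (b : ℂ)) (by simpa using hb) 0 0).norm
  have h2 : Integrable (fun x : EuclideanSpace ℝ (Fin n) => Real.exp (-b * ‖x‖ ^ 2)) := by
    refine h.congr (Filter.Eventually.of_forall fun x => ?_)
    simp only [Complex.norm_exp]
    congr 1
    rw [zero_mul, add_zero, ← Complex.ofReal_neg, ← Complex.ofReal_pow, ← Complex.ofReal_mul,
      Complex.ofReal_re]
  exact h2.comp_sub_right y

lemma integrable_poly_mul_exp {n : ℕ} (y : EuclideanSpace ℝ (Fin n)) (C b : ℝ) (k : ℕ)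
    (hb : 0 < b) :
    Integrable (fun x : EuclideanSpace ℝ (Fin n) =>
      C * ((1 + ‖x - y‖) ^ k * Real.exp (-b * ‖x - y‖ ^ 2))) := by
  obtain ⟨M, hM, H⟩ := poly_mul_exp_le k b hb
  refine Integrable.const_mul ?_ C
  refine ((integrable_exp_norm_sq y (b / 2) (by positivity)).const_mul M).mono'
    (by fun_prop) (Filter.Eventually.of_forall fun x => ?_)
  rw [Real.norm_of_nonneg (by positivity)]
  exact H _ (norm_nonneg _)

/-- If `f` and its line derivative are integrable then the derivative has zero integral. -/
lemma integral_lineDeriv_eq_zero {n : ℕ} {f f' : EuclideanSpace ℝ (Fin n) → ℝ}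
    {v : EuclideanSpace ℝ (Fin n)} (hf : Integrable f) (hf' : Integrable f')
    (h : ∀ x, HasLineDerivAt ℝ f (f' x) x v) : ∫ x, f' x = 0 := by
  have := integral_bilinear_hasLineDerivAt_right_eq_neg_left_of_integrable
    (μ := (volume : Measure (EuclideanSpace ℝ (Fin n)))) (B := ContinuousLinearMap.mul ℝ ℝ)
    (f := f) (f' := f') (g := fun _ => (1 : ℝ)) (g' := fun _ => 0) (v := v)
    (by simpa using hf') (by simp) (by simpa using hf) (fun x _ => h x)
    (fun x _ => by simpa [HasLineDerivAt] using hasDerivAt_const (0 : ℝ) (1 : ℝ))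
  simpa using this

lemma gaussianDensity_nonneg {n : ℕ} (y : EuclideanSpace ℝ (Fin n)) {s : ℝ} (hs : 0 < s)
    (x : EuclideanSpace ℝ (Fin n)) : 0 ≤ gaussianDensity n y s x := by
  unfold gaussianDensity; positivity

lemma gaussianDensity_continuous {n : ℕ} (y : EuclideanSpace ℝ (Fin n)) (s : ℝ) :
    Continuous (gaussianDensity n y s) := by
  unfold gaussianDensity; fun_prop

lemma gaussianDensity_le {n : ℕ} (hn : 1 ≤ n) (y : EuclideanSpace ℝ (Fin n)) {s σ S : ℝ}
    (hs : 0 < s) (h1 : s ≤ σ) (h2 : σ ≤ S) (x : EuclideanSpace ℝ (Fin n)) :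
    gaussianDensity n y σ x ≤ (4 * Real.pi * s) ^ (-(((n : ℝ) - 1) / 2)) *
      Real.exp (-(1 / (4 * S)) * ‖x - y‖ ^ 2) := by
  unfold gaussianDensity
  have hn' : (1 : ℝ) ≤ n := by exact_mod_cast hn
  have hσ : 0 < σ := hs.trans_le h1
  have hS : 0 < S := hσ.trans_le h2
  have hpi := Real.pi_pos
  apply mul_le_mul
  · apply Real.rpow_le_rpow_of_nonpos (by positivity)
    · gcongr
    · linarith
  · apply Real.exp_le_exp.mpr
    rw [dist_eq_norm, neg_div, neg_mul, neg_le_neg_iff, one_div_mul_eq_div]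
    gcongr
  · positivity
  · positivity

lemma hasLineDerivAt_coord {n : ℕ} (y x : EuclideanSpace ℝ (Fin n)) (i j : Fin n) :
    HasLineDerivAt ℝ (fun x : EuclideanSpace ℝ (Fin n) => (x - y) j) (if j = i then 1 else 0) x
      (EuclideanSpace.single i (1 : ℝ)) := by
  unfold HasLineDerivAt
  have h : (fun t : ℝ => (x + t • EuclideanSpace.single i (1 : ℝ) - y) j) =
      fun t : ℝ => (x - y) j + t * (if j = i then 1 else 0) := by
    ext t
    simp
    ring
  rw [h]
  simpa using ((hasDerivAt_id (0 : ℝ)).mul_const (if j = i then (1 : ℝ) else 0)).const_add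
    ((x - y) j)

lemma hasLineDerivAt_normSq {n : ℕ} (y x : EuclideanSpace ℝ (Fin n)) (i : Fin n) :
    HasLineDerivAt ℝ (fun x : EuclideanSpace ℝ (Fin n) => ‖x - y‖ ^ 2) (2 * (x - y) i) x
      (EuclideanSpace.single i (1 : ℝ)) := by
  have h : (fun x : EuclideanSpace ℝ (Fin n) => ‖x - y‖ ^ 2) = fun x => ∑ j, ((x - y) j) ^ 2 := by
    ext x; rw [EuclideanSpace.real_norm_sq_eq]
  rw [h]
  have h2 := HasDerivAt.fun_sum (u := Finset.univ)
    (fun (j : Fin n) _ => HasDerivAt.fun_pow (hasLineDerivAt_coord y x i j) 2)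
  unfold HasLineDerivAt
  convert! h2 using 1
  simp

lemma hasLineDerivAt_gaussian {n : ℕ} (y x : EuclideanSpace ℝ (Fin n)) (σ : ℝ) (hσ : 0 < σ)
    (i : Fin n) :
    HasLineDerivAt ℝ (gaussianDensity n y σ)
      (gaussianDensity n y σ x * (-((x - y) i * (1 / (2 * σ))))) x
      (EuclideanSpace.single i (1 : ℝ)) := by
  have h := hasLineDerivAt_normSq y x i
  unfold HasLineDerivAt at h ⊢
  unfold gaussianDensity
  simp only [dist_eq_norm]
  have h2 := ((h.fun_neg.div_const (4 * σ)).exp).const_mul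
    ((4 * Real.pi * σ) ^ (-(((n : ℝ) - 1) / 2)))
  convert! h2 using 1
  simp only [zero_smul, add_zero]
  field_simp
  ring

lemma hasDerivAt_gaussian {n : ℕ} (y x : EuclideanSpace ℝ (Fin n)) (τ t : ℝ) (ht : t < τ) :
    HasDerivAt (fun t => gaussianDensity n y (τ - t) x)
      (gaussianDensity n y (τ - t) x * (((n : ℝ) - 1) * (1 / (2 * (τ - t)))
        - ‖x - y‖ ^ 2 * (1 / (2 * (τ - t))) ^ 2)) t := by
  unfold gaussianDensity
  simp only [dist_eq_norm]
  have hσ : 0 < τ - t := by linarith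
  have hpi := Real.pi_pos
  have h0 : HasDerivAt (fun t => τ - t) (-1) t := by
    simpa using (hasDerivAt_id t).const_sub τ
  have h1 := (h0.const_mul (4 * Real.pi)).rpow_const (p := -(((n : ℝ) - 1) / 2))
    (Or.inl (by positivity))
  have h2 := ((hasDerivAt_const t (-‖x - y‖ ^ 2)).fun_div (h0.const_mul 4) (by positivity)).exp
  convert! h1.fun_mul h2 using 1
  rw [Real.rpow_sub_one (by positivity)]
  field_simp
  ring

/-- The pointwise algebraic identity behind the monotonicity formula. -/
lemma monotonicity_algebra {n : ℕ} (z p pt : Fin n → ℝ) (h : Fin n → Fin n → ℝ)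
    (hsym : ∀ i j, h i j = h j i) (ε A ut f e w R ρ : ℝ) (hε : 0 < ε)
    (hR : R = ∑ i, z i ^ 2)
    (hut : ut = ∑ i, h i i - (1 / ε ^ 2) * f)
    (hw : w = ut - (∑ j, z j * p j) * A) :
    ρ * (((n : ℝ) - 1) * A - R * A ^ 2) * e + ρ * (ε * ∑ j, p j * pt j + 1 / ε * f * ut) =
    (∑ i, (ρ * ((-(z i * A)) * (ε * (w * p i) + e * (z i * A)) +
      (ε * ((pt i - (p i + ∑ j, z j * h i j) * A) * p i + w * h i i) +
        ((ε * ∑ j, p j * h i j + 1 / ε * f * p i) * (z i * A) + e * A))))) +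
    ρ * ((ε * ∑ j, p j ^ 2 - e) * A - ε * w ^ 2) := by
  have hH : ∑ i, p i * ∑ j, z j * h i j = ∑ i, z i * ∑ j, p j * h i j := by
    simp only [Finset.mul_sum]
    rw [Finset.sum_comm]
    refine Finset.sum_congr rfl fun i _ => Finset.sum_congr rfl fun j _ => ?_
    rw [hsym j i]; ring
  have hS : (∑ i, (ρ * ((-(z i * A)) * (ε * (w * p i) + e * (z i * A)) +
      (ε * ((pt i - (p i + ∑ j, z j * h i j) * A) * p i + w * h i i) +
        ((ε * ∑ j, p j * h i j + 1 / ε * f * p i) * (z i * A) + e * A))))) =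
      ∑ i, ((-(ρ * A * ε * w)) * (z i * p i) + (-(ρ * A ^ 2 * e)) * z i ^ 2
        + (ρ * ε) * (p i * pt i) + (-(ρ * ε * A)) * p i ^ 2
        + (-(ρ * ε * A)) * (p i * ∑ j, z j * h i j) + (ρ * ε * w) * h i i
        + (ρ * ε * A) * (z i * ∑ j, p j * h i j) + (ρ / ε * f * A) * (z i * p i) + ρ * e * A) := by
    refine Finset.sum_congr rfl fun i _ => ?_
    ring
  rw [hS]
  simp only [Finset.sum_add_distrib, ← Finset.mul_sum]
  rw [hH, ← hR]
  simp only [Finset.sum_const, Finset.card_univ, Fintype.card_fin, nsmul_eq_mul]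
  have hL : ∑ i, h i i = ut + (1 / ε ^ 2) * f := by rw [hut]; ring
  rw [hL]
  generalize (∑ i, z i * ∑ j, p j * h i j) = H
  generalize (∑ i, p i * pt i) = Q at *
  generalize (∑ i, p i ^ 2) = P at *
  generalize (∑ i, z i * p i) = Z at *
  have hZ : Z * A = ut - w := by rw [hw]; ring
  have key : ρ * ε * w * (ut + 1 / ε ^ 2 * f) = ρ * ε * w * ut + ρ / ε * w * f := by
    field_simp
  rw [key]
  linear_combination (ρ * ε * w - ρ / ε * f) * hZ


/-- Derivative data for a bounded Allen–Cahn solution in coordinates. -/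
structure ACData (n : ℕ) (ε : ℝ) (I : Set ℝ) (u ut : EuclideanSpace ℝ (Fin n) → ℝ → ℝ)
    (p pt : Fin n → EuclideanSpace ℝ (Fin n) → ℝ → ℝ)
    (h : Fin n → Fin n → EuclideanSpace ℝ (Fin n) → ℝ → ℝ) : Prop where
  cu : ∀ t, Continuous (fun x => u x t)
  cut : ∀ t, Continuous (fun x => ut x t)
  cp : ∀ i t, Continuous (fun x => p i x t)
  cpt : ∀ i t, Continuous (fun x => pt i x t)
  ch : ∀ i j t, Continuous (fun x => h i j x t)
  du : ∀ x t, HasDerivAt (fun t => u x t) (ut x t) t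
  dp : ∀ i x t, HasDerivAt (fun t => p i x t) (pt i x t) t
  lu : ∀ i x t, HasLineDerivAt ℝ (fun x => u x t) (p i x t) x (EuclideanSpace.single i (1 : ℝ))
  lut : ∀ i x t, HasLineDerivAt ℝ (fun x => ut x t) (pt i x t) x (EuclideanSpace.single i (1 : ℝ))
  lp : ∀ i j x t, HasLineDerivAt ℝ (fun x => p j x t) (h i j x t) x
    (EuclideanSpace.single i (1 : ℝ))
  hsym : ∀ i j x t, h i j x t = h j i x t
  pde : ∀ x, ∀ t ∈ I, ut x t = ∑ i, h i i x t
    - (1 / ε ^ 2) * (2 * u x t * ((u x t) ^ 2 - 1))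
  bu : ∃ C, ∀ x, ∀ t ∈ I, |u x t| ≤ C
  but : ∃ C, ∀ x, ∀ t ∈ I, |ut x t| ≤ C
  bp : ∀ i, ∃ C, ∀ x, ∀ t ∈ I, |p i x t| ≤ C
  bpt : ∀ i, ∃ C, ∀ x, ∀ t ∈ I, |pt i x t| ≤ C
  bh : ∀ i j, ∃ C, ∀ x, ∀ t ∈ I, |h i j x t| ≤ C
  disc : ∀ x, ∀ t ∈ I, (ε / 2) * ∑ j, p j x t ^ 2 ≤ (1 / ε) * ((1 / 2) * (1 - (u x t) ^ 2) ^ 2)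

/-- The energy density in coordinates. -/
noncomputable def acEnergy {n : ℕ} (ε : ℝ) (u : EuclideanSpace ℝ (Fin n) → ℝ → ℝ)
    (p : Fin n → EuclideanSpace ℝ (Fin n) → ℝ → ℝ) (x : EuclideanSpace ℝ (Fin n)) (t : ℝ) : ℝ :=
  (ε / 2) * ∑ j, p j x t ^ 2 + (1 / ε) * ((1 / 2) * (1 - (u x t) ^ 2) ^ 2)

section Core

variable {n : ℕ} {ε : ℝ} {u ut : EuclideanSpace ℝ (Fin n) → ℝ → ℝ}
    {p pt : Fin n → EuclideanSpace ℝ (Fin n) → ℝ → ℝ}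
    {h : Fin n → Fin n → EuclideanSpace ℝ (Fin n) → ℝ → ℝ}

/-- Uniform integrable bound for Gaussian times polynomially bounded functions. -/
lemma PolyBdd.exists_bound (hn : 1 ≤ n) {y : EuclideanSpace ℝ (Fin n)} {t₁ t₂ s : ℝ} (hs : 0 < s)
    {g : EuclideanSpace ℝ (Fin n) → ℝ → ℝ} (hg : PolyBdd y (Set.Icc t₁ t₂) g) :
    ∃ B : EuclideanSpace ℝ (Fin n) → ℝ, Integrable B ∧ ∀ x, ∀ t ∈ Set.Icc t₁ t₂,
      |gaussianDensity n y (t₂ + s - t) x * g x t| ≤ B x := by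
  obtain ⟨C, k, hC, H⟩ := hg
  rcases lt_or_ge t₂ t₁ with h12 | h12
  · exact ⟨fun _ => 0, integrable_zero _ _ _, fun x t ht => absurd (ht.1.trans ht.2) (not_le.mpr h12)⟩
  have hS : 0 < t₂ + s - t₁ := by linarith
  refine ⟨_, integrable_poly_mul_exp y (C * (4 * Real.pi * s) ^ (-(((n : ℝ) - 1) / 2)))
    (1 / (4 * (t₂ + s - t₁))) k (by positivity), fun x t ht => ?_⟩
  have hσ : s ≤ t₂ + s - t := by linarith [ht.2]
  rw [abs_mul, abs_of_nonneg (gaussianDensity_nonneg y (hs.trans_le hσ) x)]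
  have h1 := gaussianDensity_le hn y hs hσ (by linarith [ht.1] : t₂ + s - t ≤ t₂ + s - t₁) x
  have hpi := Real.pi_pos
  calc _ ≤ _ := mul_le_mul h1 (H x t ht) (abs_nonneg _) (by positivity)
    _ = _ := by ring

lemma PolyBdd.integrable (hn : 1 ≤ n) {y : EuclideanSpace ℝ (Fin n)} {t₁ t₂ s : ℝ} (hs : 0 < s)
    {g : EuclideanSpace ℝ (Fin n) → ℝ → ℝ} (hg : PolyBdd y (Set.Icc t₁ t₂) g) {t : ℝ}
    (ht : t ∈ Set.Icc t₁ t₂) (hc : Continuous (fun x => g x t)) :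
    Integrable (fun x => gaussianDensity n y (t₂ + s - t) x * g x t) := by
  obtain ⟨B, hB, H⟩ := hg.exists_bound hn hs
  exact hB.mono' ((gaussianDensity_continuous y _).mul hc).aestronglyMeasurable
    (Filter.Eventually.of_forall fun x => H x t ht)

lemma ACData.hasDerivAt_energy {I : Set ℝ} (D : ACData n ε I u ut p pt h)
    (x : EuclideanSpace ℝ (Fin n)) (t : ℝ) :
    HasDerivAt (fun t => acEnergy ε u p x t)
      (ε * ∑ j, p j x t * pt j x t + 1 / ε * (2 * u x t * ((u x t) ^ 2 - 1)) * ut x t) t := by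
  unfold acEnergy
  have h1 := (HasDerivAt.fun_sum (u := Finset.univ)
    (fun (j : Fin n) _ => HasDerivAt.fun_pow (D.dp j x t) 2)).const_mul (ε / 2)
  have h2 := ((((D.du x t).fun_pow 2).const_sub 1).fun_pow 2).const_mul (1 / 2 : ℝ)
    |>.const_mul (1 / ε)
  convert! h1.fun_add h2 using 1
  congr 1
  · rw [Finset.mul_sum, Finset.mul_sum]
    exact Finset.sum_congr rfl fun j _ => by push_cast; ring
  · push_cast; ring

lemma ACData.hasLineDerivAt_energy {I : Set ℝ} (D : ACData n ε I u ut p pt h)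
    (x : EuclideanSpace ℝ (Fin n)) (t : ℝ) (i : Fin n) :
    HasLineDerivAt ℝ (fun x => acEnergy ε u p x t)
      (ε * ∑ j, p j x t * h i j x t + 1 / ε * (2 * u x t * ((u x t) ^ 2 - 1)) * p i x t) x
      (EuclideanSpace.single i (1 : ℝ)) := by
  unfold acEnergy HasLineDerivAt
  have h1 := (HasDerivAt.fun_sum (u := Finset.univ)
    (fun (j : Fin n) _ => HasDerivAt.fun_pow (D.lp i j x t) 2)).const_mul (ε / 2)
  have h2 := ((((D.lu i x t).fun_pow 2).const_sub 1).fun_pow 2).const_mul (1 / 2 : ℝ)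
    |>.const_mul (1 / ε)
  convert! h1.fun_add h2 using 1
  simp only [zero_smul, add_zero]
  congr 1
  · rw [Finset.mul_sum, Finset.mul_sum]
    exact Finset.sum_congr rfl fun j _ => by push_cast; ring
  · push_cast; ring

lemma ACData.hasLineDerivAt_field {I : Set ℝ} (D : ACData n ε I u ut p pt h)
    (y x : EuclideanSpace ℝ (Fin n)) (t σ : ℝ) (hσ : 0 < σ) (i : Fin n) :
    HasLineDerivAt ℝ (fun x => gaussianDensity n y σ x *
        (ε * ((ut x t - (∑ j, (x - y) j * p j x t) * (1 / (2 * σ))) * p i x t)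
          + acEnergy ε u p x t * ((x - y) i * (1 / (2 * σ)))))
      (gaussianDensity n y σ x * ((-((x - y) i * (1 / (2 * σ)))) *
        (ε * ((ut x t - (∑ j, (x - y) j * p j x t) * (1 / (2 * σ))) * p i x t)
          + acEnergy ε u p x t * ((x - y) i * (1 / (2 * σ)))) +
        (ε * ((pt i x t - (p i x t + ∑ j, (x - y) j * h i j x t) * (1 / (2 * σ))) * p i x t
          + (ut x t - (∑ j, (x - y) j * p j x t) * (1 / (2 * σ))) * h i i x t) +
        ((ε * ∑ j, p j x t * h i j x t + 1 / ε * (2 * u x t * ((u x t) ^ 2 - 1)) * p i x t)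
          * ((x - y) i * (1 / (2 * σ))) + acEnergy ε u p x t * (1 / (2 * σ)))))) x
      (EuclideanSpace.single i (1 : ℝ)) := by
  have hg := hasLineDerivAt_gaussian y x σ hσ i
  have he := D.hasLineDerivAt_energy x t i
  have hz := hasLineDerivAt_coord y x i i
  have hZ := HasDerivAt.fun_sum (u := Finset.univ)
    (fun (j : Fin n) _ => HasDerivAt.fun_mul (hasLineDerivAt_coord y x i j) (D.lp i j x t))
  have hw := HasDerivAt.fun_sub (D.lut i x t) (hZ.mul_const (1 / (2 * σ)))
  have h1 := (HasDerivAt.fun_mul hw (D.lp i i x t)).const_mul ε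
  have h2 := HasDerivAt.fun_mul he (HasDerivAt.mul_const hz (1 / (2 * σ)))
  have h3 := HasDerivAt.fun_mul hg (h1.fun_add h2)
  unfold HasLineDerivAt
  convert! h3 using 1
  simp only [zero_smul, add_zero, Finset.sum_add_distrib, ite_mul, one_mul, zero_mul, if_true,
    Finset.sum_ite_eq', Finset.mem_univ]
  ring

lemma ACData.continuous_energy {I : Set ℝ} (D : ACData n ε I u ut p pt h) (t : ℝ) :
    Continuous (fun x => acEnergy ε u p x t) := by
  have := D.cu t
  have := fun j => D.cp j t
  unfold acEnergy
  fun_prop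

lemma ACData.polyBdd_energy {I : Set ℝ} (D : ACData n ε I u ut p pt h)
    (y : EuclideanSpace ℝ (Fin n)) : PolyBdd y I (acEnergy ε u p) := by
  obtain ⟨_, hu⟩ := D.bu
  have hu := PolyBdd.of_bdd (y := y) hu
  have hp : ∀ j, PolyBdd y I (p j) := fun j => by
    obtain ⟨_, hp⟩ := D.bp j
    exact PolyBdd.of_bdd hp
  exact ((PolyBdd.const _).mul (PolyBdd.sum _ fun j _ => (hp j).pow 2)).add
    ((PolyBdd.const _).mul ((PolyBdd.const _).mul (((PolyBdd.const 1).sub (hu.pow 2)).pow 2)))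

/-- Monotonicity of the Gaussian-weighted energy. -/
theorem ACData.monotone (hn : 1 ≤ n) (hε : 0 < ε) {t₁ t₂ s : ℝ} (h12 : t₁ ≤ t₂) (hs : 0 < s)
    (D : ACData n ε (Set.Icc t₁ t₂) u ut p pt h) (y : EuclideanSpace ℝ (Fin n)) :
    ∫ x, gaussianDensity n y (t₂ + s - t₂) x * acEnergy ε u p x t₂ ≤
      ∫ x, gaussianDensity n y (t₂ + s - t₁) x * acEnergy ε u p x t₁ := by
  have cu := D.cu
  have cut := D.cut
  have cp := D.cp
  have cpt := D.cpt
  have ch := D.ch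
  have ce := D.continuous_energy
  have cz : ∀ i, Continuous (fun x : EuclideanSpace ℝ (Fin n) => (x - y) i) := fun i => by fun_prop
  have pe := D.polyBdd_energy y
  obtain ⟨_, pu⟩ := D.bu
  obtain ⟨_, put⟩ := D.but
  have pu := PolyBdd.of_bdd (y := y) pu
  have put := PolyBdd.of_bdd (y := y) put
  have pp : ∀ j, PolyBdd y (Set.Icc t₁ t₂) (p j) := fun j => by
    obtain ⟨_, hp⟩ := D.bp j
    exact PolyBdd.of_bdd hp
  have ppt : ∀ j, PolyBdd y (Set.Icc t₁ t₂) (pt j) := fun j => by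
    obtain ⟨_, hp⟩ := D.bpt j
    exact PolyBdd.of_bdd hp
  have ph : ∀ i j, PolyBdd y (Set.Icc t₁ t₂) (h i j) := fun i j => by
    obtain ⟨_, hp⟩ := D.bh i j
    exact PolyBdd.of_bdd hp
  have pA : PolyBdd y (Set.Icc t₁ t₂) (fun _ t => 1 / (2 * (t₂ + s - t))) := by
    refine PolyBdd.of_bdd (C := 1 / (2 * s)) fun x t ht => ?_
    have : s ≤ t₂ + s - t := by linarith [ht.2]
    have h0 : 0 < t₂ + s - t := by linarith
    rw [abs_of_nonneg (by positivity)]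
    gcongr
  have pz : ∀ i, PolyBdd y (Set.Icc t₁ t₂) (fun x _ => (x - y) i) := PolyBdd.coord
  have pR : PolyBdd y (Set.Icc t₁ t₂) (fun x _ => ‖x - y‖ ^ 2) := by
    have := PolyBdd.sum Finset.univ (fun i _ => (pz i).pow 2)
    simpa only [EuclideanSpace.real_norm_sq_eq] using this
  have pf : PolyBdd y (Set.Icc t₁ t₂) (fun x t => 2 * u x t * ((u x t) ^ 2 - 1)) :=
    ((PolyBdd.const 2).mul pu).mul ((pu.pow 2).sub (PolyBdd.const 1))
  -- the time derivative of the integrand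
  let G : EuclideanSpace ℝ (Fin n) → ℝ → ℝ := fun x t =>
    (((n : ℝ) - 1) * (1 / (2 * (t₂ + s - t))) - ‖x - y‖ ^ 2 * (1 / (2 * (t₂ + s - t))) ^ 2)
      * acEnergy ε u p x t +
    (ε * ∑ j, p j x t * pt j x t + 1 / ε * (2 * u x t * ((u x t) ^ 2 - 1)) * ut x t)
  have hG : PolyBdd y (Set.Icc t₁ t₂) G :=
    ((((PolyBdd.const _).mul pA).sub (pR.mul (pA.pow 2))).mul pe).add
      (((PolyBdd.const _).mul (PolyBdd.sum _ fun j _ => (pp j).mul (ppt j))).add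
        (((PolyBdd.const _).mul pf).mul put))
  have cG : ∀ t, Continuous (fun x => G x t) := fun t => by
    have := ce t
    have := cu t
    have := cut t
    have := fun j => cp j t
    have := fun j => cpt j t
    simp only [G]
    fun_prop
  obtain ⟨B₀, hB₀, H₀⟩ := pe.exists_bound hn hs
  obtain ⟨B, hB, H⟩ := hG.exists_bound hn hs
  have hderiv : ∀ x, ∀ t ∈ Set.Icc t₁ t₂, HasDerivAt
      (fun t => gaussianDensity n y (t₂ + s - t) x * acEnergy ε u p x t)
      (gaussianDensity n y (t₂ + s - t) x * G x t) t := fun x t ht => by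
    have h1 := (hasDerivAt_gaussian y x (t₂ + s) t (by linarith [ht.2])).fun_mul
      (D.hasDerivAt_energy x t)
    convert! h1 using 1
    simp only [G]; ring
  have hcont : ContinuousOn (fun t => ∫ x, gaussianDensity n y (t₂ + s - t) x * acEnergy ε u p x t)
      (Set.Icc t₁ t₂) := by
    refine continuousOn_of_dominated (bound := B₀) ?_ ?_ hB₀ ?_
    · exact fun t _ => ((gaussianDensity_continuous y _).mul (ce t)).aestronglyMeasurable
    · exact fun t ht => Filter.Eventually.of_forall fun x => H₀ x t ht
    · exact Filter.Eventually.of_forall fun x t ht => (hderiv x t ht).continuousAt.continuousWithinAt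
  have hInt : ∀ t ∈ Set.Ioo t₁ t₂, HasDerivAt
      (fun t => ∫ x, gaussianDensity n y (t₂ + s - t) x * acEnergy ε u p x t)
      (∫ x, gaussianDensity n y (t₂ + s - t) x * G x t) t := fun t ht => by
    refine (hasDerivAt_integral_of_dominated_loc_of_deriv_le (bound := B)
      (F := fun t x => gaussianDensity n y (t₂ + s - t) x * acEnergy ε u p x t)
      (F' := fun t x => gaussianDensity n y (t₂ + s - t) x * G x t)
      (s := Set.Icc t₁ t₂) (Icc_mem_nhds ht.1 ht.2) ?_ ?_ ?_ ?_ hB ?_).2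
    · exact Filter.Eventually.of_forall fun t =>
        ((gaussianDensity_continuous y _).mul (ce t)).aestronglyMeasurable
    · exact pe.integrable hn hs (Set.Ioo_subset_Icc_self ht) (ce t)
    · exact ((gaussianDensity_continuous y _).mul (cG t)).aestronglyMeasurable
    · exact Filter.Eventually.of_forall fun x t ht => H x t ht
    · exact Filter.Eventually.of_forall fun x t ht => hderiv x t ht
  have hneg : ∀ t ∈ Set.Ioo t₁ t₂, ∫ x, gaussianDensity n y (t₂ + s - t) x * G x t ≤ 0 := by
    intro t ht
    have htI := Set.Ioo_subset_Icc_self ht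
    have hσ : 0 < t₂ + s - t := by linarith [ht.2]
    have pw : PolyBdd y (Set.Icc t₁ t₂)
        (fun x t => ut x t - (∑ j, (x - y) j * p j x t) * (1 / (2 * (t₂ + s - t)))) :=
      put.sub ((PolyBdd.sum _ fun j _ => (pz j).mul (pp j)).mul pA)
    have pX : ∀ i, PolyBdd y (Set.Icc t₁ t₂) (fun x t =>
        (ε * ((ut x t - (∑ j, (x - y) j * p j x t) * (1 / (2 * (t₂ + s - t)))) * p i x t)
          + acEnergy ε u p x t * ((x - y) i * (1 / (2 * (t₂ + s - t)))))) := fun i =>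
      ((PolyBdd.const _).mul (pw.mul (pp i))).add (pe.mul ((pz i).mul pA))
    have pdX : ∀ i, PolyBdd y (Set.Icc t₁ t₂) (fun x t =>
        (-((x - y) i * (1 / (2 * (t₂ + s - t))))) *
        (ε * ((ut x t - (∑ j, (x - y) j * p j x t) * (1 / (2 * (t₂ + s - t)))) * p i x t)
          + acEnergy ε u p x t * ((x - y) i * (1 / (2 * (t₂ + s - t))))) +
        (ε * ((pt i x t - (p i x t + ∑ j, (x - y) j * h i j x t) * (1 / (2 * (t₂ + s - t))))
            * p i x t
          + (ut x t - (∑ j, (x - y) j * p j x t) * (1 / (2 * (t₂ + s - t)))) * h i i x t) +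
        ((ε * ∑ j, p j x t * h i j x t + 1 / ε * (2 * u x t * ((u x t) ^ 2 - 1)) * p i x t)
          * ((x - y) i * (1 / (2 * (t₂ + s - t)))) + acEnergy ε u p x t *
            (1 / (2 * (t₂ + s - t)))))) := fun i =>
      (((pz i).mul pA).neg.mul (pX i)).add
        (((PolyBdd.const _).mul ((((ppt i).sub (((pp i).add
          (PolyBdd.sum _ fun j _ => (pz j).mul (ph i j))).mul pA)).mul (pp i)).add
            (pw.mul (ph i i)))).add
          (((((PolyBdd.const _).mul (PolyBdd.sum _ fun j _ => (pp j).mul (ph i j))).add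
            (((PolyBdd.const _).mul pf).mul (pp i))).mul ((pz i).mul pA)).add (pe.mul pA)))
    have e0 := ce t
    have e1 := cu t
    have e2 := cut t
    have e3 := fun j => cp j t
    have e4 := fun j => cpt j t
    have e5 := fun i j => ch i j t
    have iX := fun i => (pX i).integrable hn hs htI (by fun_prop)
    have idX := fun i => (pdX i).integrable hn hs htI (by fun_prop)
    have hzero := fun i => integral_lineDeriv_eq_zero (iX i) (idX i)
      (fun x => D.hasLineDerivAt_field y x t (t₂ + s - t) hσ i)
    have hsum := integral_finsetSum Finset.univ (fun i _ => idX i)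
    simp only [hzero, Finset.sum_const_zero] at hsum
    rw [← hsum]
    refine integral_mono (hG.integrable hn hs htI (cG t))
      (integrable_finsetSum Finset.univ (fun i _ => idX i)) fun x => ?_
    have alg := monotonicity_algebra (fun i => (x - y) i) (fun i => p i x t) (fun i => pt i x t)
      (fun i j => h i j x t) (fun i j => D.hsym i j x t) ε (1 / (2 * (t₂ + s - t))) (ut x t)
      (2 * u x t * ((u x t) ^ 2 - 1)) (acEnergy ε u p x t)
      (ut x t - (∑ j, (x - y) j * p j x t) * (1 / (2 * (t₂ + s - t)))) (‖x - y‖ ^ 2)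
      (gaussianDensity n y (t₂ + s - t) x) hε (EuclideanSpace.real_norm_sq_eq _)
      (D.pde x t htI) rfl
    have hle : gaussianDensity n y (t₂ + s - t) x *
        ((ε * ∑ j, p j x t ^ 2 - acEnergy ε u p x t) * (1 / (2 * (t₂ + s - t)))
          - ε * (ut x t - (∑ j, (x - y) j * p j x t) * (1 / (2 * (t₂ + s - t)))) ^ 2) ≤ 0 := by
      apply mul_nonpos_of_nonneg_of_nonpos (gaussianDensity_nonneg y hσ x)
      have hd := D.disc x t htI
      have h1 : ε * ∑ j, p j x t ^ 2 - acEnergy ε u p x t ≤ 0 := by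
        unfold acEnergy; linarith
      have h2 := mul_nonpos_of_nonpos_of_nonneg h1
        (by positivity : 0 ≤ 1 / (2 * (t₂ + s - t)))
      have h3 : 0 ≤ ε * (ut x t - (∑ j, (x - y) j * p j x t) * (1 / (2 * (t₂ + s - t)))) ^ 2 := by
        positivity
      linarith
    have hGe : gaussianDensity n y (t₂ + s - t) x * G x t =
      gaussianDensity n y (t₂ + s - t) x * (((n : ℝ) - 1) * (1 / (2 * (t₂ + s - t)))
        - ‖x - y‖ ^ 2 * (1 / (2 * (t₂ + s - t))) ^ 2) * acEnergy ε u p x t +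
      gaussianDensity n y (t₂ + s - t) x * (ε * ∑ j, p j x t * pt j x t
        + 1 / ε * (2 * u x t * ((u x t) ^ 2 - 1)) * ut x t) := by
      simp only [G]; ring
    show gaussianDensity n y (t₂ + s - t) x * G x t ≤ _
    rw [hGe, alg]
    linarith
  have hanti := antitoneOn_of_deriv_nonpos (convex_Icc t₁ t₂) hcont
    (by
      rw [interior_Icc]
      exact fun t ht => (hInt t ht).differentiableAt.differentiableWithinAt)
    (by
      rw [interior_Icc]
      intro t ht
      rw [(hInt t ht).deriv]
      exact hneg t ht)
  exact hanti (Set.left_mem_Icc.mpr h12) (Set.right_mem_Icc.mpr h12) h12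

end Core

section SmoothSetup

variable {n : ℕ}

/-- Directional derivative of a function on space-time. -/
noncomputable def dirD (v : EuclideanSpace ℝ (Fin n) × ℝ)
    (G : EuclideanSpace ℝ (Fin n) × ℝ → ℝ) (q : EuclideanSpace ℝ (Fin n) × ℝ) : ℝ :=
  fderiv ℝ G q v

variable {G : EuclideanSpace ℝ (Fin n) × ℝ → ℝ}

lemma contDiff_dirD (hG : ContDiff ℝ (⊤ : ℕ∞) G) (v : EuclideanSpace ℝ (Fin n) × ℝ) :
    ContDiff ℝ (⊤ : ℕ∞) (dirD v G) := by
  unfold dirD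
  exact (hG.fderiv_right (m := (⊤ : ℕ∞)) (by simp)).clm_apply contDiff_const

lemma dirD_comm (hG : ContDiff ℝ (⊤ : ℕ∞) G) (v w : EuclideanSpace ℝ (Fin n) × ℝ)
    (q : EuclideanSpace ℝ (Fin n) × ℝ) : dirD v (dirD w G) q = dirD w (dirD v G) q := by
  have hd : DifferentiableAt ℝ (fderiv ℝ G) q :=
    ((hG.fderiv_right (m := (⊤ : ℕ∞)) (by simp)).differentiable (by simp)).differentiableAt
  have hs : IsSymmSndFDerivAt ℝ G q := hG.contDiffAt.isSymmSndFDerivAt (by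
    simp only [minSmoothness_of_isRCLikeNormedField]
    exact WithTop.coe_le_coe.mpr (le_top : (2 : ℕ∞) ≤ ⊤))
  have key : ∀ v w, dirD v (dirD w G) q = fderiv ℝ (fderiv ℝ G) q v w := fun v w => by
    unfold dirD
    rw [fderiv_clm_apply hd (differentiableAt_const w)]
    simp
  rw [key, key]
  exact hs.eq v w

lemma hasDerivAt_time (hG : ContDiff ℝ (⊤ : ℕ∞) G) (x : EuclideanSpace ℝ (Fin n)) (t : ℝ) :
    HasDerivAt (fun t => G (x, t)) (dirD (0, 1) G (x, t)) t := by
  have h1 := (hG.differentiable (by simp)).differentiableAt (x := (x, t)) |>.hasFDerivAt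
  exact h1.comp_hasDerivAt t ((hasDerivAt_const t x).prodMk (hasDerivAt_id t))

lemma hasFDerivAt_space (hG : ContDiff ℝ (⊤ : ℕ∞) G) (x : EuclideanSpace ℝ (Fin n)) (t : ℝ) :
    HasFDerivAt (fun x => G (x, t)) ((fderiv ℝ G (x, t)).comp
      (ContinuousLinearMap.inl ℝ (EuclideanSpace ℝ (Fin n)) ℝ)) x := by
  have h1 := (hG.differentiable (by simp)).differentiableAt (x := (x, t)) |>.hasFDerivAt
  exact h1.comp x (hasFDerivAt_prodMk_left x t)

lemma fderiv_space (hG : ContDiff ℝ (⊤ : ℕ∞) G) (x v : EuclideanSpace ℝ (Fin n)) (t : ℝ) :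
    fderiv ℝ (fun x => G (x, t)) x v = dirD (v, 0) G (x, t) := by
  rw [(hasFDerivAt_space hG x t).fderiv]
  simp [dirD]

lemma hasLineDerivAt_space (hG : ContDiff ℝ (⊤ : ℕ∞) G) (x v : EuclideanSpace ℝ (Fin n)) (t : ℝ) :
    HasLineDerivAt ℝ (fun x => G (x, t)) (dirD (v, 0) G (x, t)) x v := by
  have := (hasFDerivAt_space hG x t).hasLineDerivAt v
  simpa [dirD] using this

lemma contDiff_space (hG : ContDiff ℝ (⊤ : ℕ∞) G) (t : ℝ) :
    ContDiff ℝ (⊤ : ℕ∞) (fun x => G (x, t)) :=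
  hG.comp (contDiff_id.prodMk contDiff_const)

lemma norm_iteratedFDeriv_dirD_le (hG : ContDiff ℝ (⊤ : ℕ∞) G) (k : ℕ)
    (x : EuclideanSpace ℝ (Fin n)) (t : ℝ) (i : Fin n) :
    ‖iteratedFDeriv ℝ k (fun x => dirD (EuclideanSpace.single i (1 : ℝ), 0) G (x, t)) x‖ ≤
      ‖iteratedFDeriv ℝ (k + 1) (fun x => G (x, t)) x‖ := by
  have h : (fun x => dirD (EuclideanSpace.single i (1 : ℝ), 0) G (x, t)) =
      fun x => fderiv ℝ (fun x => G (x, t)) x (EuclideanSpace.single i (1 : ℝ)) := by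
    ext x; rw [fderiv_space hG]
  rw [h, ← norm_iteratedFDeriv_fderiv]
  have := norm_iteratedFDeriv_clm_apply_const (𝕜 := ℝ) (c := EuclideanSpace.single i (1 : ℝ))
    (n := k) (N := (⊤ : ℕ∞)) (x := x)
    ((contDiff_space hG t).fderiv_right (m := (⊤ : ℕ∞)) (by simp)).contDiffAt
    (by exact_mod_cast le_top)
  simpa using this

lemma gradient_normSq (hG : ContDiff ℝ (⊤ : ℕ∞) G) (x : EuclideanSpace ℝ (Fin n)) (t : ℝ) :
    ‖gradient (fun x => G (x, t)) x‖ ^ 2 =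
      ∑ j, dirD (EuclideanSpace.single j (1 : ℝ), 0) G (x, t) ^ 2 := by
  rw [EuclideanSpace.real_norm_sq_eq]
  refine Finset.sum_congr rfl fun j _ => ?_
  congr 1
  rw [← fderiv_space hG]
  have h1 : inner ℝ (gradient (fun x => G (x, t)) x) (EuclideanSpace.single j (1 : ℝ)) =
      fderiv ℝ (fun x => G (x, t)) x (EuclideanSpace.single j (1 : ℝ)) := by
    simp [gradient]
  rw [← h1, EuclideanSpace.inner_single_right]
  simp

end SmoothSetup

/-- Monotonicity of entropy under the Allen–Cahn flow on `ℝⁿ` with nonpositive discrepancy: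
for all `0 ≤ t₁ ≤ t₂`, `λ(μ^{t₂}) ≤ λ(μ^{t₁})`. -/
theorem allen_cahn_entropy_monotone (n : ℕ) (hn : 1 ≤ n) (ε : ℝ) (hε : 0 < ε)
    (u : EuclideanSpace ℝ (Fin n) → ℝ → ℝ)
    (hsmooth : ContDiff ℝ (⊤ : ℕ∞) (fun p : EuclideanSpace ℝ (Fin n) × ℝ => u p.1 p.2))
    (hu1 : ∀ x t, |u x t| ≤ 1)
    (hpde : ∀ x, ∀ t, 0 ≤ t →
      deriv (u x) t = spaceLaplacian n (fun y => u y t) x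
        - (1 / ε ^ 2) * (2 * u x t * ((u x t) ^ 2 - 1)))
    (hbnd : ∀ T > (0 : ℝ), ∃ C : ℝ, ∀ x, ∀ t ∈ Set.Icc (0 : ℝ) T,
      (∀ i ≤ 3, ‖iteratedFDeriv ℝ i (fun y => u y t) x‖ ≤ C) ∧ |deriv (u x) t| ≤ C)
    (μ : ℝ → Measure (EuclideanSpace ℝ (Fin n)))
    (hμ : ∀ t, μ t = volume.withDensity (fun x =>
      ENNReal.ofReal ((ε / 2) * ‖gradient (fun y => u y t) x‖ ^ 2
        + (1 / ε) * ((1 / 2) * (1 - (u x t) ^ 2) ^ 2))))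
    (hdisc : ∀ x, ∀ t, 0 ≤ t →
      (ε / 2) * ‖gradient (fun y => u y t) x‖ ^ 2
        ≤ (1 / ε) * ((1 / 2) * (1 - (u x t) ^ 2) ^ 2)) :
    ∀ t₁ t₂ : ℝ, 0 ≤ t₁ → t₁ ≤ t₂ → entropy n (μ t₂) ≤ entropy n (μ t₁) := by
  intro t₁ t₂ ht₁ h12
  let U : EuclideanSpace ℝ (Fin n) × ℝ → ℝ := fun q => u q.1 q.2
  have hU : ContDiff ℝ (⊤ : ℕ∞) U := hsmooth
  let p : Fin n → EuclideanSpace ℝ (Fin n) × ℝ → ℝ := fun i =>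
    dirD (EuclideanSpace.single i (1 : ℝ), 0) U
  let ut : EuclideanSpace ℝ (Fin n) × ℝ → ℝ := dirD (0, 1) U
  let pt : Fin n → EuclideanSpace ℝ (Fin n) × ℝ → ℝ := fun i => dirD (0, 1) (p i)
  let h : Fin n → Fin n → EuclideanSpace ℝ (Fin n) × ℝ → ℝ := fun i j =>
    dirD (EuclideanSpace.single i (1 : ℝ), 0) (p j)
  let k : Fin n → Fin n → EuclideanSpace ℝ (Fin n) × ℝ → ℝ := fun i j =>
    dirD (EuclideanSpace.single i (1 : ℝ), 0) (h j j)
  have hp : ∀ i, ContDiff ℝ (⊤ : ℕ∞) (p i) := fun i => contDiff_dirD hU _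
  have hut : ContDiff ℝ (⊤ : ℕ∞) ut := contDiff_dirD hU _
  have hpt : ∀ i, ContDiff ℝ (⊤ : ℕ∞) (pt i) := fun i => contDiff_dirD (hp i) _
  have hh : ∀ i j, ContDiff ℝ (⊤ : ℕ∞) (h i j) := fun i j => contDiff_dirD (hp j) _
  have hpt' : ∀ i q, pt i q = dirD (EuclideanSpace.single i (1 : ℝ), 0) ut q := fun i q =>
    dirD_comm hU _ _ q
  have hderiv : ∀ x t, deriv (u x) t = ut (x, t) := fun x t => (hasDerivAt_time hU x t).deriv
  have hpde' : ∀ x, ∀ t, 0 ≤ t → ut (x, t) = ∑ i, h i i (x, t)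
      - (1 / ε ^ 2) * (2 * u x t * ((u x t) ^ 2 - 1)) := by
    intro x t ht
    rw [← hderiv, hpde x t ht]
    congr 1
    unfold spaceLaplacian
    refine Finset.sum_congr rfl fun i _ => ?_
    have e1 : (fun z => fderiv ℝ (fun y => u y t) z (EuclideanSpace.single i (1 : ℝ))) =
        fun z => p i (z, t) := by
      ext z; exact fderiv_space hU z _ t
    rw [e1]
    exact fderiv_space (hp i) x _ t
  have hgrad : ∀ x t, ‖gradient (fun y => u y t) x‖ ^ 2 = ∑ j, p j (x, t) ^ 2 := fun x t =>
    gradient_normSq hU x t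
  have hpt_formula : ∀ i x t, 0 ≤ t → pt i (x, t) = ∑ j, k i j (x, t)
      - (1 / ε ^ 2) * (2 * (3 * u x t ^ 2 - 1) * p i (x, t)) := by
    intro i x t ht
    have h1 : HasLineDerivAt ℝ (fun x => ut (x, t)) (pt i (x, t)) x
        (EuclideanSpace.single i (1 : ℝ)) := by
      rw [hpt']; exact hasLineDerivAt_space hut x _ t
    have e : (fun x => ut (x, t)) = fun x => ∑ i, h i i (x, t)
      - (1 / ε ^ 2) * (2 * u x t * ((u x t) ^ 2 - 1)) := by
      ext x; exact hpde' x t ht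
    rw [e] at h1
    have hu' : HasLineDerivAt ℝ (fun x => u x t) (p i (x, t)) x
        (EuclideanSpace.single i (1 : ℝ)) := hasLineDerivAt_space hU x _ t
    have h2 := HasDerivAt.fun_sum (u := Finset.univ)
      (fun (j : Fin n) _ => hasLineDerivAt_space (hh j j) x (EuclideanSpace.single i (1 : ℝ)) t)
    have h3 := ((HasDerivAt.const_mul 2 hu').fun_mul
      ((HasDerivAt.fun_pow hu' 2).sub_const 1)).const_mul (1 / ε ^ 2)
    have h4 := HasDerivAt.unique h1 (h2.fun_sub h3)
    rw [h4]
    simp only [zero_smul, add_zero, k]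
    push_cast
    ring
  obtain ⟨C, hC⟩ := hbnd (t₂ + 1) (by linarith)
  have hI : ∀ t ∈ Set.Icc t₁ t₂, t ∈ Set.Icc (0 : ℝ) (t₂ + 1) := fun t ht =>
    ⟨ht₁.trans ht.1, by linarith [ht.2]⟩
  have bp : ∀ i x, ∀ t ∈ Set.Icc t₁ t₂, |p i (x, t)| ≤ C := by
    intro i x t ht
    have h1 := norm_iteratedFDeriv_dirD_le hU 0 x t i
    rw [norm_iteratedFDeriv_zero, Real.norm_eq_abs] at h1
    exact h1.trans ((hC x t (hI t ht)).1 1 (by norm_num))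
  have bh : ∀ i j x, ∀ t ∈ Set.Icc t₁ t₂, |h i j (x, t)| ≤ C := by
    intro i j x t ht
    have h1 := norm_iteratedFDeriv_dirD_le (hp j) 0 x t i
    rw [norm_iteratedFDeriv_zero, Real.norm_eq_abs] at h1
    have h2 := norm_iteratedFDeriv_dirD_le hU 1 x t j
    exact (h1.trans h2).trans ((hC x t (hI t ht)).1 2 (by norm_num))
  have bk : ∀ i j x, ∀ t ∈ Set.Icc t₁ t₂, |k i j (x, t)| ≤ C := by
    intro i j x t ht
    have h1 := norm_iteratedFDeriv_dirD_le (hh j j) 0 x t i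
    rw [norm_iteratedFDeriv_zero, Real.norm_eq_abs] at h1
    have h2 := norm_iteratedFDeriv_dirD_le (hp j) 1 x t j
    have h3 := norm_iteratedFDeriv_dirD_le hU 2 x t j
    exact ((h1.trans h2).trans h3).trans ((hC x t (hI t ht)).1 3 (by norm_num))
  have D : ACData n ε (Set.Icc t₁ t₂) u (fun x t => ut (x, t)) (fun i x t => p i (x, t))
      (fun i x t => pt i (x, t)) (fun i j x t => h i j (x, t)) :=
    { cu := fun t => (contDiff_space hU t).continuous
      cut := fun t => (contDiff_space hut t).continuous
      cp := fun i t => (contDiff_space (hp i) t).continuous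
      cpt := fun i t => (contDiff_space (hpt i) t).continuous
      ch := fun i j t => (contDiff_space (hh i j) t).continuous
      du := fun x t => hasDerivAt_time hU x t
      dp := fun i x t => hasDerivAt_time (hp i) x t
      lu := fun i x t => hasLineDerivAt_space hU x _ t
      lut := fun i x t => by rw [hpt']; exact hasLineDerivAt_space hut x _ t
      lp := fun i j x t => hasLineDerivAt_space (hp j) x _ t
      hsym := fun i j x t => dirD_comm hU _ _ _
      pde := fun x t ht => hpde' x t (ht₁.trans ht.1)
      bu := ⟨1, fun x t _ => hu1 x t⟩
      but := ⟨C, fun x t ht => by rw [← hderiv]; exact (hC x t (hI t ht)).2⟩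
      bp := fun i => ⟨C, bp i⟩
      bpt := fun i => by
        refine ⟨(n : ℝ) * C + 1 / ε ^ 2 * (2 * 4 * C), fun x t ht => ?_⟩
        have hC0 : 0 ≤ C := (abs_nonneg _).trans (bp i x t ht)
        rw [hpt_formula i x t (ht₁.trans ht.1)]
        refine (abs_sub _ _).trans (add_le_add ?_ ?_)
        · refine (Finset.abs_sum_le_sum_abs _ _).trans ?_
          refine (Finset.sum_le_sum fun j _ => bk i j x t ht).trans ?_
          simp
        · rw [abs_mul, abs_of_nonneg (by positivity : 0 ≤ 1 / ε ^ 2), abs_mul, abs_mul, abs_two]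
          have hu2 : u x t ^ 2 ≤ 1 := by
            have := hu1 x t
            rw [← sq_abs]
            exact pow_le_one₀ (abs_nonneg _) this
          have h4 : |3 * u x t ^ 2 - 1| ≤ 4 := by
            rw [abs_le]; constructor <;> nlinarith [sq_nonneg (u x t)]
          have := bp i x t ht
          gcongr
      bh := fun i j => ⟨C, bh i j⟩
      disc := fun x t ht => by
        have := hdisc x t (ht₁.trans ht.1)
        rwa [hgrad] at this }
  have hconv : ∀ y s t, 0 < s → t ∈ Set.Icc t₁ t₂ →
      Integrable (fun x => gaussianDensity n y s x * acEnergy ε u (fun i x t => p i (x, t)) x t) →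
      ∫⁻ x, ENNReal.ofReal (gaussianDensity n y s x) ∂(μ t) = ENNReal.ofReal
        (∫ x, gaussianDensity n y s x * acEnergy ε u (fun i x t => p i (x, t)) x t) := by
    intro y s t hs ht hInt
    have hE : (fun x => ENNReal.ofReal ((ε / 2) * ‖gradient (fun y => u y t) x‖ ^ 2
        + (1 / ε) * ((1 / 2) * (1 - (u x t) ^ 2) ^ 2))) =
        fun x => ENNReal.ofReal (acEnergy ε u (fun i x t => p i (x, t)) x t) := by
      ext x; rw [hgrad]; rfl
    have hE0 : ∀ x, 0 ≤ acEnergy ε u (fun i x t => p i (x, t)) x t := fun x => by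
      unfold acEnergy; positivity
    rw [hμ, hE, lintegral_withDensity_eq_lintegral_mul _
      (D.continuous_energy t).measurable.ennreal_ofReal
      (gaussianDensity_continuous y s).measurable.ennreal_ofReal,
      ofReal_integral_eq_lintegral_ofReal hInt (Filter.Eventually.of_forall fun x =>
        mul_nonneg (gaussianDensity_nonneg y hs x) (hE0 x))]
    refine lintegral_congr fun x => ?_
    rw [ENNReal.ofReal_mul (gaussianDensity_nonneg y hs x), mul_comm]
    rfl
  have hl := Set.left_mem_Icc.mpr h12
  have hr := Set.right_mem_Icc.mpr h12
  unfold entropy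
  refine iSup_le fun y => iSup_le fun s => iSup_le fun hs => ?_
  have hs' : 0 < t₂ + s - t₁ := by linarith
  refine le_trans ?_ (le_iSup_of_le y (le_iSup_of_le (t₂ + s - t₁) (le_iSup_of_le hs' le_rfl)))
  have hi := fun t ht => (D.polyBdd_energy y).integrable hn hs (t := t) ht (D.continuous_energy t)
  have es : s = t₂ + s - t₂ := by ring
  have hm := D.monotone hn hε h12 hs y
  have hi2 := hi t₂ hr
  rw [← es] at hm hi2
  rw [hconv y s t₂ hs hr hi2, hconv y _ t₁ hs' hl (hi t₁ hl)]
  exact ENNReal.ofReal_le_ofReal hm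
end
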